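/- arXiv:solv-int/9909002 — 4 statements merged into one kernel-verified Lean document; each statement's English description precedes it below -/
import Mathlib

section
/- Let 0 < γ < 2 and let R : ℤ + iℤ → ℝ be positive at all points of V and at all points −N + i(N−1) and N+1 + iN (N ∈ ℕ) occurring below. Suppose R satisfies equation (square) with parameter γ at every z ∈ V_l, and equation (Ri) at every z = iM, M ∈ ℕ. Then R satisfies: (a) equation (Ri) at every z ∈ V ∖ {N + iN : N ∈ ℕ}; (b) equation (Le) at every z ∈ V ∖ {−N + iN : N ∈ ℕ}; (c) equation (lnR) at every z ∈ V_int. -/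
noncomputable section

/-- Equation (square) with parameter `γ` at `z = N + iM` (the lattice `ℤ + iℤ` is
indexed by pairs `(N, M)`). -/
def SquareEq (γ : ℝ) (R : ℤ → ℤ → ℝ) (N M : ℤ) : Prop :=
  R N M * R (N+1) M * (-2*(M : ℝ) - γ) +
  R (N+1) M * R (N+1) (M+1) * (2*((N : ℝ)+1) - γ) +
  R (N+1) (M+1) * R N (M+1) * (2*((M : ℝ)+1) - γ) +
  R N (M+1) * R N M * (-2*(N : ℝ) - γ) = 0

/-- Equation (Ri) at `z = N + iM`. -/
def RiEq (R : ℤ → ℤ → ℝ) (N M : ℤ) : Prop :=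
  ((N + M : ℤ) : ℝ) * (R N M ^ 2 - R (N+1) M * R N (M-1)) * (R N (M+1) + R (N+1) M) +
  ((M - N : ℤ) : ℝ) * (R N M ^ 2 - R N (M+1) * R (N+1) M) * (R (N+1) M + R N (M-1)) = 0

/-- Equation (Le) at `z = N + iM`. -/
def LeEq (R : ℤ → ℤ → ℝ) (N M : ℤ) : Prop :=
  ((N + M : ℤ) : ℝ) * (R N M ^ 2 - R N (M+1) * R (N-1) M) * (R (N-1) M + R N (M-1)) +
  ((M - N : ℤ) : ℝ) * (R N M ^ 2 - R (N-1) M * R N (M-1)) * (R N (M+1) + R (N-1) M) = 0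

/-- Equation (lnR) at `z = N + iM`. -/
def LnREq (R : ℤ → ℤ → ℝ) (N M : ℤ) : Prop :=
  R N M ^ 2 * (R (N+1) M + R N (M+1) + R (N-1) M + R N (M-1)) =
    (1 / R (N+1) M + 1 / R N (M+1) + 1 / R (N-1) M + 1 / R N (M-1)) *
      (R (N+1) M * R N (M+1) * R (N-1) M * R N (M-1))

/-- Membership `N + iM ∈ V_l = V ∪ {-k + i(k-1) : k ∈ ℕ}`. -/
def memVl (N M : ℤ) : Prop := |N| ≤ M ∨ (N ≤ -1 ∧ M = -N - 1)

theorem aux_lnr {p q a b c E W : ℝ} (hp : 0 ≤ p) (hq : 0 ≤ q) (hpq : 0 < p + q)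
    (hE : 0 < E) (hW : 0 < W) (hb : 0 < b)
    (hRi : p * (b^2 - E * a) * (c + E) + q * (b^2 - c * E) * (E + a) = 0)
    (hLe : p * (b^2 - c * W) * (W + a) + q * (b^2 - W * a) * (c + W) = 0) :
    (W + a) * (b^2 - c * E) + (b^2 - a * W) * (E + c) = 0 := by
  have h1 : ((p * c + q * a) * W - (p * a + q * c) * E) * (W * E + b^2) = 0 := by
    linear_combination W * hRi - E * hLe
  have h2 : (p * c + q * a) * W - (p * a + q * c) * E = 0 := by
    rcases mul_eq_zero.1 h1 with h | h
    · exact h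
    · have : 0 < W * E + b^2 := by positivity
      exact absurd h this.ne'
  have h3 : (p + q) * ((W + a) * (b^2 - c * E) + (b^2 - a * W) * (E + c)) = 0 := by
    linear_combination hRi + hLe - (E - W) * h2
  rcases mul_eq_zero.1 h3 with h | h
  · exact absurd h hpq.ne'
  · exact h

/-- star relation with the top neighbour -/
theorem aux_star_top {p q a b c E W : ℝ} (ha : 0 < a) (hW : 0 < W)
    (hL : (W + a) * (b^2 - c * E) + (b^2 - a * W) * (E + c) = 0)
    (hLe : p * (b^2 - c * W) * (W + a) + q * (b^2 - W * a) * (c + W) = 0) :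
    p * (E + c) * (b^2 - c * W) + q * (c + W) * (c * E - b^2) = 0 := by
  have h : (W + a) * (p * (E + c) * (b^2 - c * W) + q * (c + W) * (c * E - b^2)) = 0 := by
    linear_combination (E + c) * hLe - q * (c + W) * hL
  rcases mul_eq_zero.1 h with h | h
  · exact absurd h (by positivity)
  · exact h

/-- from the star relation with the bottom neighbour to (Ri) -/
theorem aux_ri {p q a b c E W : ℝ} (hp : 0 < p) (ha : 0 < a) (hc : 0 < c) (hW : 0 < W)
    (hS : q * (E + a) * (b^2 - a * W) + p * (a + W) * (a * E - b^2) = 0)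
    (hLe : p * (b^2 - c * W) * (W + a) + q * (b^2 - W * a) * (c + W) = 0) :
    p * (b^2 - E * a) * (c + E) + q * (b^2 - c * E) * (E + a) = 0 := by
  have hL : (W + c) * (b^2 - a * E) + (b^2 - c * W) * (E + a) = 0 := by
    have h : p * (a + W) * ((W + c) * (b^2 - a * E) + (b^2 - c * W) * (E + a)) = 0 := by
      linear_combination (E + a) * hLe - (c + W) * hS
    rcases mul_eq_zero.1 h with h | h
    · exact absurd h (by positivity)
    · exact h
  have h : (a + W) * (p * (b^2 - E * a) * (c + E) + q * (b^2 - c * E) * (E + a)) = 0 := by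
    linear_combination (E + c) * (-hS) + q * (E + a) * hL
  rcases mul_eq_zero.1 h with h | h
  · exact absurd h (by positivity)
  · exact h

/-- moving the star relation one step up -/
theorem aux_up {n m γ b c E W E' W' : ℝ} (hγ0 : 0 < γ) (hγ2 : γ < 2) (hn : 1 ≤ n) (hm : n ≤ m)
    (hb : 0 < b) (hc : 0 < c) (hE : 0 < E)
    (hsE : b * E * (-2*m - γ) + E * E' * (2*(n+1) - γ) + E' * c * (2*(m+1) - γ)
      + c * b * (-2*n - γ) = 0)
    (hsW : W * b * (-2*m - γ) + b * c * (2*n - γ) + c * W' * (2*(m+1) - γ)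
      + W' * W * (-2*(n-1) - γ) = 0)
    (hS : (n+m) * (E + c) * (b^2 - c * W) + (m-n) * (c + W) * (c * E - b^2) = 0) :
    (m+1-n) * (E' + b) * (c^2 - b * W') + (n+(m+1)) * (b + W') * (b * E' - c^2) = 0 := by
  have hEd : 0 < E * (2*n+2-γ) + c * (2*m+2-γ) := by
    have : 0 < 2*n+2-γ := by linarith
    have : 0 < 2*m+2-γ := by linarith
    positivity
  have hWd : c * (2*m+2-γ) - W * (2*n-2+γ) ≠ 0 := by
    intro h0
    have h1 : b * (W * (2*m+γ) - c * (2*n-γ)) = 0 := by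
      linear_combination W' * h0 - hsW
    have h2 : W * (2*m+γ) - c * (2*n-γ) = 0 := by
      rcases mul_eq_zero.1 h1 with h | h
      · exact absurd h hb.ne'
      · exact h
    have h3 : c * (4 * (m + n) * (m + 1 - n)) = 0 := by
      linear_combination (2*m+γ) * h0 + (2*n-2+γ) * h2
    have : 0 < m + n := by linarith
    have : 0 < m + 1 - n := by linarith
    have : 0 < c * (4 * (m + n) * (m + 1 - n)) := by positivity
    linarith
  have hE1 : E' * (E * (2*n+2-γ) + c * (2*m+2-γ)) = b * (E*(2*m+γ) + c*(2*n+γ)) := by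
    linear_combination hsE
  have hW1 : W' * (c * (2*m+2-γ) - W * (2*n-2+γ)) = b * (W * (2*m+γ) - c * (2*n-γ)) := by
    linear_combination hsW
  have hE2 := eq_div_of_mul_eq hEd.ne' hE1
  have hW2 := eq_div_of_mul_eq hWd hW1
  have key : (E * (2*n+2-γ) + c * (2*m+2-γ)) * (c * (2*m+2-γ) - W * (2*n-2+γ)) *
     ((m+1-n) * (E' + b) * (c^2 - b * W') + (n+(m+1)) * (b + W') * (b * E' - c^2)) = 0 := by
    set x := E * (2*n+2-γ) + c * (2*m+2-γ) with hx
    set y := c * (2*m+2-γ) - W * (2*n-2+γ) with hy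
    have e1 : x * y * ((m+1-n) * (E' + b) * (c^2 - b * W') +
        (n+(m+1)) * (b + W') * (b * E' - c^2)) =
        (m+1-n) * (E' * x + b * x) * (c^2 * y - b * (W' * y)) +
        (n+(m+1)) * (b * y + W' * y) * (b * (E' * x) - c^2 * x) := by ring
    rw [e1, hE1, hW1, hx, hy]
    linear_combination 4 * (n+m+1) * (m-n+1) * b * c * hS
  rcases mul_eq_zero.1 key with h | h
  · exact absurd h (mul_ne_zero hEd.ne' hWd)
  · exact h

/-- from (Ri) at z to (Le) at z+1 -/
theorem aux_le {n m γ r s t e f g : ℝ} (hγ0 : 0 < γ) (hγ2 : γ < 2) (hn : 0 ≤ n)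
    (hm : m = n + 1 ∨ n + 1 < m)
    (hr : 0 < r) (hs : 0 < s) (ht : 0 < t) (he : 0 < e) (hg : 0 < g)
    (hsq1 : r * e * (-2*m - γ) + e * f * (2*(n+1) - γ) + f * t * (2*(m+1) - γ)
      + t * r * (-2*n - γ) = 0)
    (hsq0 : s * g * (-2*(m-1) - γ) + g * e * (2*(n+1) - γ) + e * r * (2*(m-1+1) - γ)
      + r * s * (-2*n - γ) = 0)
    (hRi : (n+m) * (r^2 - e * s) * (t + e) + (m-n) * (r^2 - t * e) * (e + s) = 0) :
    (n+1+m) * (e^2 - f * r) * (r + g) + (m-(n+1)) * (e^2 - r * g) * (f + r) = 0 := by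
  have hx0 : 0 < e * (2*n+2-γ) + t * (2*m+2-γ) := by
    have : 0 < 2*n+2-γ := by linarith
    have : 0 < 2*m+2-γ := by rcases hm with h | h <;> linarith
    positivity
  have hf1 : f * (e * (2*n+2-γ) + t * (2*m+2-γ)) = r * (e*(2*m+γ) + t*(2*n+γ)) := by
    linear_combination hsq1
  have hg1 : g * (e * (2*n+2-γ) - s * (2*m-2+γ)) = r * (s*(2*n+γ) - e*(2*m-γ)) := by
    linear_combination hsq0
  rcases hm with hm | hm
  · subst hm
    have h1 : (g + r) * (e * (2*n+2-γ) - s * (2*n+γ)) = 0 := by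
      linear_combination hg1
    have h2 : e * (2*n+2-γ) - s * (2*n+γ) = 0 := by
      rcases mul_eq_zero.1 h1 with h | h
      · exact absurd h (by positivity)
      · exact h
    have h3 : ((e + s) * (e * (2*n+2-γ) + t * (2*(n+1)+2-γ))) * (e^2 - f * r) = 0 := by
      linear_combination (-2) * e * hRi + (e+t) * (e^2 + r^2) * h2 - (e + s) * r * hf1
    rcases mul_eq_zero.1 h3 with h | h
    · exact absurd h (by positivity)
    · rw [h]; ring
  · have hy0 : e * (2*n+2-γ) - s * (2*m-2+γ) ≠ 0 := by
      intro h0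
      have h1 : r * (s*(2*n+γ) - e*(2*m-γ)) = 0 := by rw [← hg1, h0, mul_zero]
      have h2 : s*(2*n+γ) - e*(2*m-γ) = 0 := by
        rcases mul_eq_zero.1 h1 with h | h
        · exact absurd h hr.ne'
        · exact h
      have h3 : e * (4 * (m + n) * (m - 1 - n)) = 0 := by
        linear_combination -(2*n+γ) * h0 - (2*m-2+γ) * h2
      have : 0 < m + n := by linarith
      have : 0 < m - 1 - n := by linarith
      have : 0 < e * (4 * (m + n) * (m - 1 - n)) := by positivity
      linarith
    have key : (e * (2*n+2-γ) + t * (2*m+2-γ)) * (e * (2*n+2-γ) - s * (2*m-2+γ)) *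
        ((n+1+m) * (e^2 - f * r) * (r + g) + (m-(n+1)) * (e^2 - r * g) * (f + r)) = 0 := by
      set x := e * (2*n+2-γ) + t * (2*m+2-γ) with hx
      set y := e * (2*n+2-γ) - s * (2*m-2+γ) with hy
      have e1 : x * y * ((n+1+m) * (e^2 - f * r) * (r + g) +
          (m-(n+1)) * (e^2 - r * g) * (f + r)) =
          (n+1+m) * (e^2 * x - (f * x) * r) * (r * y + g * y) +
          (m-(n+1)) * (e^2 * y - r * (g * y)) * (f * x + r * x) := by ring
      rw [e1, hf1, hg1, hx, hy]
      linear_combination 4 * (n+m+1) * (m-n-1) * r * e * hRi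
    rcases mul_eq_zero.1 key with h | h
    · exact absurd h (mul_ne_zero hx0.ne' hy0)
    · exact h

theorem half_lemma (γ : ℝ) (hγ0 : 0 < γ) (hγ2 : γ < 2)
    (R : ℤ → ℤ → ℝ)
    (hposV : ∀ N M : ℤ, 0 ≤ N → N ≤ M → 0 < R N M)
    (hposR : ∀ k : ℤ, 0 ≤ k → 0 < R (k+1) k)
    (hsq : ∀ N M : ℤ, 0 ≤ N → N ≤ M → SquareEq γ R N M)
    (hRiAxis : ∀ M : ℤ, 0 < M → RiEq R 0 M) (n : ℕ) :
    (∀ M : ℤ, (n : ℤ) < M → RiEq R n M) ∧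
    (∀ M : ℤ, (n : ℤ) + 1 ≤ M → LeEq R (n+1) M) := by
  have stepLe : ∀ N : ℤ, 0 ≤ N → (∀ M : ℤ, N < M → RiEq R N M) →
      ∀ M : ℤ, N + 1 ≤ M → LeEq R (N+1) M := by
    intro N hN hRi M hM
    have h1 := hsq N M hN (by omega)
    have h0 := hsq N (M-1) hN (by omega)
    have h2 := hRi M (by omega)
    have hg : 0 < R (N+1) (M-1) := by
      rcases eq_or_lt_of_le hM with h | h
      · have := hposR N hN
        rwa [show M - 1 = N by omega]
      · exact hposV _ _ (by omega) (by omega)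
    have hmm : (M : ℝ) = (N : ℝ) + 1 ∨ (N : ℝ) + 1 < M := by
      rcases eq_or_lt_of_le hM with h | h
      · left; rw [← h]; push_cast; ring
      · right; exact_mod_cast h
    unfold SquareEq at h1 h0
    unfold RiEq at h2
    unfold LeEq
    simp only [sub_add_cancel, add_sub_cancel_right] at *
    push_cast at *
    exact aux_le hγ0 hγ2 (by exact_mod_cast hN) hmm
      (hposV N M hN (by omega)) (hposV N (M-1) hN (by omega)) (hposV N (M+1) hN (by omega))
      (hposV (N+1) M (by omega) (by omega)) hg h1
      (by simpa using h0) h2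
  have stepRi : ∀ N : ℤ, 1 ≤ N → (∀ M : ℤ, N ≤ M → LeEq R N M) →
      ∀ M : ℤ, N < M → RiEq R N M := by
    intro N hN hLe
    have up : ∀ M : ℤ, N ≤ M →
        ((N:ℝ)+M) * (R (N+1) M + R N (M+1)) * (R N M^2 - R N (M+1) * R (N-1) M)
          + ((M:ℝ)-N) * (R N (M+1) + R (N-1) M) * (R N (M+1) * R (N+1) M - R N M^2) = 0 →
        RiEq R N (M+1) := by
      intro M hM hS
      have hNr : (1:ℝ) ≤ N := by exact_mod_cast hN
      have hMr : (N:ℝ) ≤ M := by exact_mod_cast hM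
      have h1 := hsq N M (by omega) hM
      have h0 := hsq (N-1) M (by omega) (by omega)
      have hL := hLe (M+1) (by omega)
      have hE : 0 < R (N+1) M := by
        rcases eq_or_lt_of_le hM with h | h
        · subst h; exact hposR N (by omega)
        · exact hposV _ _ (by omega) (by omega)
      unfold SquareEq at h1 h0
      unfold LeEq at hL
      unfold RiEq
      simp only [sub_add_cancel, add_sub_cancel_right] at *
      push_cast at *
      have hs2 := aux_up (W' := R (N-1) (M+1)) hγ0 hγ2 hNr hMr (hposV N M (by omega) hM)
        (hposV N (M+1) (by omega) (by omega)) hE h1 (by linear_combination h0) hS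
      exact aux_ri (by linarith) (hposV N M (by omega) hM)
        (hposV N (M+1+1) (by omega) (by omega)) (hposV (N-1) (M+1) (by omega) (by omega))
        hs2 hL
    have star : ∀ k : ℕ, 
        ((N:ℝ)+(N+k:ℤ)) * (R (N+1) (N+k) + R N (N+k+1)) *
          (R N (N+k)^2 - R N (N+k+1) * R (N-1) (N+k))
          + (((N+k:ℤ):ℝ)-N) * (R N (N+k+1) + R (N-1) (N+k)) *
          (R N (N+k+1) * R (N+1) (N+k) - R N (N+k)^2) = 0 := by
      intro k
      induction k with
      | zero =>
        have hL := hLe N le_rfl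
        unfold LeEq at hL
        have hW := hposV (N-1) N (by omega) (by omega)
        have ha := hposR (N-1) (by omega)
        rw [sub_add_cancel] at ha
        have hNr : (1:ℝ) ≤ N := by exact_mod_cast hN
        push_cast at *
        simp only [add_zero, sub_self, zero_mul] at *
        have : (R N N ^ 2 - R N (N+1) * R (N-1) N) = 0 := by
          rcases mul_eq_zero.1 hL with h | h
          · rcases mul_eq_zero.1 h with h | h
            · linarith
            · exact h
          · linarith
        rw [this]; ring
      | succ k ih =>
        have hR := up (N+k) (by omega) ih
        have hL := hLe (N+k+1) (by omega)
        have hNr : (1:ℝ) ≤ N := by exact_mod_cast hN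
        have hk : (0:ℝ) ≤ k := by positivity
        rw [show N + ((k+1:ℕ):ℤ) = N + k + 1 by push_cast; ring]
        unfold RiEq at hR
        unfold LeEq at hL
        simp only [add_sub_cancel_right] at *
        push_cast at *
        have hW := hposV (N-1) (N+k+1) (by omega) (by omega)
        have hL3 := aux_lnr (by linarith) (by linarith) (by linarith)
          (hposV (N+1) (N+k+1) (by omega) (by omega))
          hW (hposV N (N+k+1) (by omega) (by omega)) hR hL
        exact aux_star_top (hposV N (N+k) (by omega) (by omega)) hW hL3 hL
    intro M hM
    obtain ⟨k, hk⟩ := Int.eq_ofNat_of_zero_le (show 0 ≤ M - 1 - N by omega)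
    have := up (N+k) (by omega) (star k)
    rwa [show N + (k:ℤ) + 1 = M by omega] at this
  induction n with
  | zero =>
    refine ⟨by simpa using hRiAxis, ?_⟩
    exact stepLe 0 le_rfl hRiAxis
  | succ k ih =>
    have h := stepRi (k+1) (by omega) ih.2
    have h2 := stepLe (k+1) (by omega) h
    push_cast
    exact ⟨h, h2⟩

/-- Lemma 3 (extension lemma): if a positive radius function satisfies (square) on
`V_l` and (Ri) on the imaginary axis, then it satisfies (Ri) on
`V ∖ {N + iN : N ∈ ℕ}`, (Le) on `V ∖ {-N + iN : N ∈ ℕ}` and (lnR) on `V_int`. -/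
theorem extension_lemma (γ : ℝ) (hγ0 : 0 < γ) (hγ2 : γ < 2)
    (R : ℤ → ℤ → ℝ)
    (hposV : ∀ N M : ℤ, |N| ≤ M → 0 < R N M)
    (hposL : ∀ k : ℤ, 1 ≤ k → 0 < R (-k) (k-1))
    (hposR : ∀ k : ℤ, 0 ≤ k → 0 < R (k+1) k)
    (hsq : ∀ N M : ℤ, memVl N M → SquareEq γ R N M)
    (hRiAxis : ∀ M : ℤ, 0 ≤ M → RiEq R 0 M) :
    (∀ N M : ℤ, |N| ≤ M → ¬(0 ≤ N ∧ M = N) → RiEq R N M) ∧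
    (∀ N M : ℤ, |N| ≤ M → ¬(N ≤ 0 ∧ M = -N) → LeEq R N M) ∧
    (∀ N M : ℤ, |N| < M → LnREq R N M) := by
  have hposR' : ∀ k : ℤ, 0 ≤ k → 0 < R (-(k+1)) k := by
    intro k hk
    have := hposL (k+1) (by omega)
    rwa [add_sub_cancel_right] at this
  have hsqR : ∀ N M : ℤ, 0 ≤ N → N ≤ M → SquareEq γ R N M := by
    intro N M h1 h2
    exact hsq N M (Or.inl (by rw [abs_of_nonneg h1]; exact h2))
  have hsqL : ∀ N M : ℤ, 0 ≤ N → N ≤ M → SquareEq γ (fun a b => R (-a) b) N M := by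
    intro N M h1 h2
    have h : SquareEq γ R (-N-1) M := by
      apply hsq
      rcases eq_or_lt_of_le h2 with h | h
      · right; omega
      · left; rw [abs_of_nonpos (by omega)]; omega
    unfold SquareEq at h ⊢
    simp only [sub_add_cancel] at h
    beta_reduce
    rw [show -(N+1) = -N-1 by ring]
    push_cast at h
    linear_combination h
  have hRL : ∀ N M : ℤ, RiEq (fun a b => R (-a) b) N M ↔ LeEq R (-N) M := by
    intro N M
    unfold RiEq LeEq
    beta_reduce
    rw [show -(N+1) = -N-1 by ring]
    push_cast
    constructor <;> intro h <;> linear_combination h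
  have hLR : ∀ N M : ℤ, LeEq (fun a b => R (-a) b) N M ↔ RiEq R (-N) M := by
    intro N M
    unfold RiEq LeEq
    beta_reduce
    rw [show -(N-1) = -N+1 by ring]
    push_cast
    constructor <;> intro h <;> linear_combination h
  have hp0 : ∀ M : ℤ, 0 ≤ M → 0 < R 0 M := fun M h => hposV 0 M (by simpa using h)
  have hsym : ∀ k : ℕ, R (-1) (k+1) = R 1 (k+1) := by
    intro k
    induction k with
    | zero =>
      have h1 := hsqR 0 0 le_rfl le_rfl
      have h2 := hsqL 0 0 le_rfl le_rfl
      have a0 := hp0 0 le_rfl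
      have a1 := hp0 1 (by omega)
      have b1 := hposR 0 le_rfl
      have b2 := hposR' 0 le_rfl
      unfold SquareEq at h1 h2
      simp at h1 h2 b1 b2 ⊢
      have e1 : (R 1 0 + R 0 1) * ((2-γ) * R 1 1 - γ * R 0 0) = 0 := by
        linear_combination h1
      have e2 : (R (-1) 0 + R 0 1) * ((2-γ) * R (-1) 1 - γ * R 0 0) = 0 := by
        linear_combination h2
      have f1 := (mul_eq_zero.1 e1).resolve_left (by positivity)
      have f2 := (mul_eq_zero.1 e2).resolve_left (by positivity)
      have : (2 - γ) ≠ 0 := by linarith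
      apply mul_left_cancel₀ this
      linarith
    | succ k ih =>
      have h1 := hsqR 0 (k+1) le_rfl (by omega)
      have h2 := hsqL 0 (k+1) le_rfl (by omega)
      have a0 := hp0 (k+1) (by omega)
      have a1 := hp0 (k+1+1) (by omega)
      have b1 := hposV 1 (k+1) (by simp)
      unfold SquareEq at h1 h2
      simp only [neg_zero, zero_add, ih] at h1 h2
      push_cast at *
      have hk : (0:ℝ) ≤ k := by positivity
      have hd : 0 < R 1 (k+1) * (2-γ) + R 0 (k+1+1) * (2*((k:ℝ)+1+1)-γ) := by
        have : 0 < 2 - γ := by linarith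
        have : 0 < 2*((k:ℝ)+1+1)-γ := by linarith
        positivity
      apply mul_left_cancel₀ hd.ne'
      linear_combination h2 - h1
  have hLeAxis : ∀ M : ℤ, 0 < M → LeEq R 0 M := by
    intro M hM
    obtain ⟨k, hk⟩ := Int.eq_ofNat_of_zero_le (show 0 ≤ M - 1 by omega)
    have hs := hsym k
    rw [show (k:ℤ) + 1 = M by omega] at hs
    have h := hRiAxis M hM.le
    unfold RiEq at h
    unfold LeEq
    simp only [zero_add, zero_sub, sub_zero] at *
    rw [hs]
    linear_combination h
  have HR := half_lemma γ hγ0 hγ2 R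
    (fun N M h1 h2 => hposV N M (by rw [abs_of_nonneg h1]; exact h2)) hposR hsqR
    (fun M h => hRiAxis M h.le)
  have HL := half_lemma γ hγ0 hγ2 (fun a b => R (-a) b)
    (fun N M h1 h2 => hposV (-N) M (by rw [abs_neg, abs_of_nonneg h1]; exact h2)) hposR' hsqL
    (fun M h => (hRL 0 M).2 (by simpa using hLeAxis M h))
  have A : ∀ N M : ℤ, |N| ≤ M → ¬(0 ≤ N ∧ M = N) → RiEq R N M := by
    intro N M h1 h2
    rw [abs_le] at h1
    rcases le_or_gt 0 N with h | h
    · obtain ⟨k, rfl⟩ := Int.eq_ofNat_of_zero_le h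
      exact (HR k).1 M (by omega)
    · obtain ⟨k, hk⟩ := Int.eq_ofNat_of_zero_le (show 0 ≤ -N - 1 by omega)
      have := (hLR _ _).1 ((HL k).2 M (by omega))
      rwa [show -((k:ℤ)+1) = N by omega] at this
  have B : ∀ N M : ℤ, |N| ≤ M → ¬(N ≤ 0 ∧ M = -N) → LeEq R N M := by
    intro N M h1 h2
    rw [abs_le] at h1
    rcases le_or_gt N 0 with h | h
    · obtain ⟨k, hk⟩ := Int.eq_ofNat_of_zero_le (show 0 ≤ -N by omega)
      have := (hRL _ _).1 ((HL k).1 M (by omega))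
      rwa [show -(k:ℤ) = N by omega] at this
    · obtain ⟨k, hk⟩ := Int.eq_ofNat_of_zero_le (show 0 ≤ N - 1 by omega)
      have := (HR k).2 M (by omega)
      rwa [show (k:ℤ)+1 = N by omega] at this
  refine ⟨A, B, ?_⟩
  intro N M h
  have h' := abs_lt.1 h
  have h1 := A N M h.le (by omega)
  have h2 := B N M h.le (by omega)
  have hE := hposV (N+1) M (abs_le.2 (by omega))
  have hW := hposV (N-1) M (abs_le.2 (by omega))
  have hc := hposV N (M+1) (abs_le.2 (by omega))
  have ha := hposV N (M-1) (abs_le.2 (by omega))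
  unfold RiEq at h1
  unfold LeEq at h2
  have hL := aux_lnr (by exact_mod_cast (show 0 ≤ N + M by omega))
    (by exact_mod_cast (show 0 ≤ M - N by omega))
    (by exact_mod_cast (show 0 < N + M + (M - N) by omega)) hE hW
    (hposV N M h.le) h1 h2
  unfold LnREq
  field_simp
  linear_combination hL

end
end

section
/- Let 0 < γ < 2 and let R : ℤ + iℤ → ℝ satisfy equation (square) with parameter γ at every z ∈ V_l and equation (Ri) at every z ∈ V_int, with R(0) = 1 and R(i) = tan(γπ/4), and suppose R(N+1+iN) + R(N+i(N+1)) ≠ 0 and R(−N−1+iN) + R(−N+i(N+1)) ≠ 0 for all N ≥ 0. If R(iM) > 0 for every integer M ≥ 0, then R(z) > 0 for every z ∈ V. -/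
noncomputable section

/-- Proposition 2: if a solution of (square) and (Ri) with the `Z^γ` initial data
is positive on the imaginary axis, then it is positive on all of `V`. -/
theorem positivity_propagates (γ : ℝ) (hγ0 : 0 < γ) (hγ2 : γ < 2)
    (R : ℤ → ℤ → ℝ)
    (hsq : ∀ N M : ℤ, memVl N M → SquareEq γ R N M)
    (hRi : ∀ N M : ℤ, |N| < M → RiEq R N M)
    (h0 : R 0 0 = 1)
    (hi : R 0 1 = Real.tan (γ * Real.pi / 4))
    (hne1 : ∀ N : ℤ, 0 ≤ N → R (N+1) N + R N (N+1) ≠ 0)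
    (hne2 : ∀ N : ℤ, 0 ≤ N → R (-N-1) N + R (-N) (N+1) ≠ 0)
    (haxis : ∀ M : ℤ, 0 ≤ M → 0 < R 0 M) :
    ∀ N M : ℤ, |N| ≤ M → 0 < R N M := by
  have hR : ∀ n : ℕ, ∀ k : ℕ, 0 < R (n : ℤ) ((n : ℤ) + k) := by
    intro n
    induction n with
    | zero => intro k; simpa using haxis k (by omega)
    | succ n ih =>
      have hn : (0 : ℝ) ≤ n := Nat.cast_nonneg n
      intro k
      induction k with
      | zero =>
        have e := hsq n n (Or.inl (by simp))
        have hne := hne1 n (by omega)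
        have ha := ih 0
        unfold SquareEq at e
        push_cast at e ha ⊢
        simp only [add_zero] at ha ⊢
        have e2 : (R (n+1) n + R n (n+1)) *
            (R (n+1) (n+1) * (2*((n : ℝ)+1) - γ) - R n n * (2 * n + γ)) = 0 := by
          linear_combination e
        have e3 := (mul_eq_zero.mp e2).resolve_left hne
        have h1 : 0 < R n n * (2 * n + γ) := by positivity
        have h2 : 0 < 2*((n : ℝ)+1) - γ := by linarith
        exact pos_of_mul_pos_left (by linarith : 0 < R (n+1) (n+1) * (2*((n : ℝ)+1) - γ)) h2.le
      | succ k ihk =>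
        have hk : (0 : ℝ) ≤ k := Nat.cast_nonneg k
        have e := hsq n (n + 1 + k) (Or.inl (by rw [abs_of_nonneg (by omega)]; omega))
        have ha := ih (k+1)
        have hd := ih (k+2)
        unfold SquareEq at e
        push_cast at e ha hd ihk ⊢
        rw [show (n : ℤ) + (k + 1) = n + 1 + k by ring] at ha
        rw [show (n : ℤ) + (k + 2) = n + 1 + k + 1 by ring] at hd
        rw [show (n : ℤ) + 1 + (k + 1) = n + 1 + k + 1 by ring]
        generalize R n (n+1+k) = a at *
        generalize R n (n+1+k+1) = d at *
        generalize R (n+1) (n+1+k) = b at *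
        generalize R (n+1) (n+1+k+1) = c at *
        have h1 : 0 < 2*((n : ℝ)+1) - γ := by linarith
        have h2 : 0 < 2*((n : ℝ)+1+k+1) - γ := by linarith
        have h3 : 0 < b * (2*((n : ℝ)+1) - γ) + d * (2*((n : ℝ)+1+k+1) - γ) := by positivity
        have h4 : 0 < a * (b * (2*((n : ℝ)+1+k) + γ) + d * (2*n + γ)) := by positivity
        refine pos_of_mul_pos_left (lt_of_lt_of_eq h4 ?_) h3.le
        linear_combination -e
  have hL : ∀ n : ℕ, ∀ k : ℕ, 0 < R (-(n : ℤ)) ((n : ℤ) + k) := by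
    intro n
    induction n with
    | zero => intro k; simpa using haxis k (by omega)
    | succ n ih =>
      have hn : (0 : ℝ) ≤ n := Nat.cast_nonneg n
      intro k
      induction k with
      | zero =>
        have e := hsq (-(n:ℤ)-1) n (Or.inr ⟨by omega, by omega⟩)
        have hne := hne2 n (by omega)
        have ha := ih 0
        unfold SquareEq at e
        push_cast at e ha ⊢
        simp only [add_zero, sub_add_cancel] at ha e ⊢
        rw [show -((n : ℤ) + 1) = -n - 1 by ring]
        have e2 : (R (-n-1) n + R (-n) (n+1)) *
            (R (-n-1) (n+1) * (2*((n : ℝ)+1) - γ) - R (-n) n * (2 * n + γ)) = 0 := by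
          linear_combination e
        have e3 := (mul_eq_zero.mp e2).resolve_left hne
        have h1 : 0 < R (-n) n * (2 * n + γ) := by positivity
        have h2 : 0 < 2*((n : ℝ)+1) - γ := by linarith
        exact pos_of_mul_pos_left (by linarith : 0 < R (-n-1) (n+1) * (2*((n : ℝ)+1) - γ)) h2.le
      | succ k ihk =>
        have hk : (0 : ℝ) ≤ k := Nat.cast_nonneg k
        have e := hsq (-(n:ℤ)-1) (n + 1 + k) (Or.inl (by rw [abs_of_nonpos (by omega)]; omega))
        have hb := ih (k+1)
        have hc := ih (k+2)
        unfold SquareEq at e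
        push_cast at e hb hc ihk ⊢
        simp only [sub_add_cancel] at e
        rw [show (n : ℤ) + (k + 1) = n + 1 + k by ring] at hb
        rw [show (n : ℤ) + (k + 2) = n + 1 + k + 1 by ring] at hc
        rw [show -((n : ℤ) + 1) = -n - 1 by ring] at ihk ⊢
        rw [show (n : ℤ) + 1 + (k + 1) = n + 1 + k + 1 by ring]
        generalize R (-n-1) (n+1+k) = a at *
        generalize R (-n-1) (n+1+k+1) = d at *
        generalize R (-n) (n+1+k) = b at *
        generalize R (-n) (n+1+k+1) = c at *
        have h1 : 0 < 2*((n : ℝ)+1) - γ := by linarith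
        have h2 : 0 < 2*((n : ℝ)+1+k+1) - γ := by linarith
        have h3 : 0 < c * (2*((n : ℝ)+1+k+1) - γ) + a * (2*((n : ℝ)+1) - γ) := by positivity
        have h4 : 0 < b * (a * (2*((n : ℝ)+1+k) + γ) + c * (2*n + γ)) := by positivity
        refine pos_of_mul_pos_left (lt_of_lt_of_eq h4 ?_) h3.le
        linear_combination -e
  intro N M h
  obtain ⟨k, hk⟩ := Int.eq_ofNat_of_zero_le (sub_nonneg.mpr h)
  rcases le_total 0 N with hN | hN
  · rw [abs_of_nonneg hN] at hk
    obtain ⟨n, rfl⟩ := Int.eq_ofNat_of_zero_le hN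
    have := hR n k
    rwa [show (n : ℤ) + k = M by omega] at this
  · rw [abs_of_nonpos hN] at hk
    obtain ⟨n, hn⟩ := Int.eq_ofNat_of_zero_le (neg_nonneg.mpr hN)
    have := hL n k
    rwa [show (n : ℤ) + k = M by omega, show -(n : ℤ) = N by omega] at this


end
end

section
/- Let 0 < γ < 2 and 0 < α < π, and let f : ℤ≥0 × ℤ≥0 → ℂ satisfy the cross-ratio equation (q) and the constraint (c) with parameter γ at every (n,m) (all denominators occurring being nonzero), with initial data f_{0,0} = 0, f_{1,0} = 1, f_{0,1} = e^{iα}. Then f is an immersion (interiors of convex hulls of adjacent elementary quadrilaterals are disjoint) if and only if there exists a sequence of angles α_n ∈ (0, π/2), n ≥ 0, with α_0 = α/2, such that f_{n,n+1} − f_{n,n} = e^{2iα_n}(f_{n+1,n} − f_{n,n}) for all n ≥ 0 and the sequence x_n = e^{iα_n} satisfies the discrete Painlevé equation (P) with parameter γ for all n ≥ 0. -/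
open Complex

noncomputable section

/-- Vertex set of the elementary quadrilateral at `(n,m)`. -/
def quadVerts (f : ℕ → ℕ → ℂ) (n m : ℕ) : Set ℂ :=
  {f n m, f (n+1) m, f (n+1) (m+1), f n (m+1)}

/-- Interior of the convex hull of the elementary quadrilateral at `(n,m)`. -/
def quadInt (f : ℕ → ℕ → ℂ) (n m : ℕ) : Set ℂ :=
  interior (convexHull ℝ (quadVerts f n m))

/-- `f` is an immersion: interiors of (convex hulls of) adjacent elementary
quadrilaterals are disjoint. -/
def IsImmersion (f : ℕ → ℕ → ℂ) : Prop :=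
  ∀ n m : ℕ,
    Disjoint (quadInt f n m) (quadInt f (n+1) m) ∧
    Disjoint (quadInt f n m) (quadInt f n (m+1))

/-- The cross-ratio equation (q). -/
def CrossRatioEq (f : ℕ → ℕ → ℂ) : Prop :=
  ∀ n m : ℕ,
    (f n m - f (n+1) m) * (f (n+1) (m+1) - f n (m+1)) =
      -((f (n+1) m - f (n+1) (m+1)) * (f n (m+1) - f n m))

/-- Nonvanishing of the denominators occurring in (q). -/
def QDenomNonzero (f : ℕ → ℕ → ℂ) : Prop :=
  ∀ n m : ℕ, f (n+1) m - f (n+1) (m+1) ≠ 0 ∧ f n (m+1) - f n m ≠ 0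

/-- Nonvanishing of the denominators occurring in (c). -/
def CDenomNonzero (f : ℕ → ℕ → ℂ) : Prop :=
  ∀ n m : ℕ, (n ≠ 0 → f (n+1) m - f (n-1) m ≠ 0) ∧ (m ≠ 0 → f n (m+1) - f n (m-1) ≠ 0)

/-- The constraint (c) with parameter `γ`; for `n = 0` (resp. `m = 0`) the
corresponding term is absent. -/
def ConstraintC (γ : ℂ) (f : ℕ → ℕ → ℂ) : Prop :=
  ∀ n m : ℕ,
    γ * f n m =
      (if n = 0 then 0 else
        2 * (n : ℂ) * ((f (n+1) m - f n m) * (f n m - f (n-1) m)) / (f (n+1) m - f (n-1) m)) +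
      (if m = 0 then 0 else
        2 * (m : ℂ) * ((f n (m+1) - f n m) * (f n m - f n (m-1))) / (f n (m+1) - f n (m-1)))

/-- The discrete Painlevé equation (P) with parameter `γ`: for `n = 0` the second
term on the left-hand side is absent (its coefficient `n` vanishes); all occurring
denominators are required to be nonzero. -/
def PainleveP (γ : ℂ) (x : ℕ → ℂ) : Prop :=
  ∀ n : ℕ,
    (Complex.I + x n * x (n+1) ≠ 0) ∧
    (n ≠ 0 → Complex.I + x (n-1) * x n ≠ 0) ∧
    ((n : ℂ) + 1) * (x n ^ 2 - 1) * ((x (n+1) - Complex.I * x n) / (Complex.I + x n * x (n+1))) -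
      (n : ℂ) * (x n ^ 2 + 1) * ((x (n-1) + Complex.I * x n) / (Complex.I + x (n-1) * x n)) =
    γ * x n

/-! ## axis analysis -/

def sAx (γ : ℝ) : ℕ → ℝ
  | 0 => 1
  | (k+1) => (2 * k + γ) / (2 * k + 2 - γ) * sAx γ k

lemma sAx_pos (γ : ℝ) (h0 : 0 < γ) (h2 : γ < 2) (k : ℕ) : 0 < sAx γ k := by
  induction k with
  | zero => simp [sAx]
  | succ k ih =>
    have hk : (0:ℝ) ≤ k := Nat.cast_nonneg k
    have : 0 < 2 * (k:ℝ) + 2 - γ := by linarith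
    simp only [sAx]
    positivity

lemma axis_aux (γ : ℝ) (h0 : 0 < γ) (h2 : γ < 2) (F : ℕ → ℂ) (c : ℂ) (hc : c ≠ 0)
    (hF0 : F 0 = 0) (hF1 : F 1 = c)
    (hd : ∀ n, F (n+2) - F n ≠ 0)
    (hF : ∀ n : ℕ, (γ:ℂ) * F (n+1) =
      2 * ((n:ℂ)+1) * ((F (n+2) - F (n+1)) * (F (n+1) - F n)) / (F (n+2) - F n)) (k : ℕ) :
    (γ:ℂ) * F (2*k) = 2 * k * sAx γ k * c ∧ F (2*k+1) - F (2*k) = sAx γ k * c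
      ∧ F (2*k+2) - F (2*k+1) = sAx γ (k+1) * c := by
  have step : ∀ k : ℕ, ((γ:ℂ) * F (2*k) = 2 * k * sAx γ k * c ∧ F (2*k+1) - F (2*k) = sAx γ k * c) →
      (γ:ℂ) * F (2*k+2) = 2 * (k+1) * sAx γ (k+1) * c ∧ F (2*k+2) - F (2*k+1) = sAx γ (k+1) * c := by
    rintro k ⟨h1, h3⟩
    have hs := sAx_pos γ h0 h2 k
    have hsc : (sAx γ k : ℂ) ≠ 0 := by exact_mod_cast hs.ne'
    have hk : (0:ℝ) ≤ k := Nat.cast_nonneg k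
    have hden : 2 * (k:ℝ) + 2 - γ ≠ 0 := by linarith
    have hdenc : 2 * (k:ℂ) + 2 - γ ≠ 0 := by exact_mod_cast hden
    have hrec : (sAx γ (k+1) : ℂ) * (2*k+2-γ) = (2*k+γ) * sAx γ k := by
      have : sAx γ (k+1) * (2*k+2-γ) = (2*k+γ) * sAx γ k := by
        simp only [sAx]
        rw [div_mul_eq_mul_div, div_mul_cancel₀ _ hden]
      exact_mod_cast this
    have e := hF (2*k)
    rw [eq_div_iff (hd _)] at e
    push_cast at e
    have hF1' : F (2*k+1) = F (2*k) + sAx γ k * c := by rw [← h3]; ring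
    have hg : (γ:ℂ) * F (2*k+1) = (2*k+γ) * sAx γ k * c := by
      rw [hF1', mul_add, h1]; ring
    have key : F (2*k+2) - F (2*k+1) = sAx γ (k+1) * c := by
      rw [hg, h3] at e
      have hX : F (2*k+2) - F (2*k) = (F (2*k+2) - F (2*k+1)) + sAx γ k * c := by
        rw [← h3]; ring
      rw [hX] at e
      have e2 : (sAx γ k * c) * ((2*k+2-γ) * (F (2*k+2) - F (2*k+1)) - (2*k+γ) * (sAx γ k * c)) = 0 := by
        linear_combination -e
      have e3 := (mul_eq_zero.mp e2).resolve_left (mul_ne_zero hsc hc)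
      have hr : (sAx γ (k+1) : ℂ) * (2*k+2-γ) = (2*k+γ) * sAx γ k := hrec
      apply mul_left_cancel₀ hdenc
      linear_combination e3 - c * hr
    refine ⟨?_, key⟩
    have : F (2*k+2) = F (2*k+1) + sAx γ (k+1) * c := by rw [← key]; ring
    rw [this, mul_add, hg]
    linear_combination - c * hrec
  have main : ∀ k : ℕ, ((γ:ℂ) * F (2*k) = 2 * k * sAx γ k * c ∧ F (2*k+1) - F (2*k) = sAx γ k * c) := by
    intro k
    induction k with
    | zero => simp [hF0, hF1, sAx]
    | succ k ih =>
      obtain ⟨a1, a2⟩ := step k ih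
      refine ⟨by rw [show 2*(k+1) = 2*k+2 by ring, a1]; push_cast; ring, ?_⟩
      have e := hF (2*k+1)
      have hs := sAx_pos γ h0 h2 (k+1)
      have hsc : (sAx γ (k+1) : ℂ) ≠ 0 := by exact_mod_cast hs.ne'
      have hk : ((k:ℂ) + 1) ≠ 0 := by exact_mod_cast (Nat.succ_ne_zero k)
      rw [eq_div_iff (hd _), show 2*k+1+1 = 2*k+2 by ring, show 2*k+1+2 = 2*k+3 by ring, a1, a2] at e
      push_cast at e
      have hX : F (2*k+3) - F (2*k+1) = (F (2*k+3) - F (2*k+2)) + sAx γ (k+1) * c := by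
        rw [← a2]; ring
      rw [hX] at e
      have e2 : (2 * ((k:ℂ)+1) * (sAx γ (k+1) * c)) * ((F (2*k+3) - F (2*k+2)) - sAx γ (k+1) * c) = 0 := by
        linear_combination -e
      have e3 := (mul_eq_zero.mp e2).resolve_left
        (mul_ne_zero (mul_ne_zero two_ne_zero hk) (mul_ne_zero hsc hc))
      rw [show 2*(k+1)+1 = 2*k+3 by ring, show 2*(k+1) = 2*k+2 by ring]
      linear_combination e3
  exact ⟨(main k).1, (main k).2, (step k (main k)).2⟩

/-! ## factorization -/

def gF (γ : ℝ) (f : ℕ → ℕ → ℂ) (n : ℕ) : ℕ → ℂ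
  | 0 => if Even n then (sAx γ (n/2) : ℂ) else 1
  | (m+1) => (f n (m+1) - f n m) / (I * gF γ f n m)

structure Fac (γ : ℝ) (β : ℂ) (f g : ℕ → ℕ → ℂ) : Prop where
  h : ∀ n m, f (n+1) m - f n m = g n m * g (n+1) m
  v : ∀ n m, f n (m+1) - f n m = I * g n m * g n (m+1)
  nz : ∀ n m, g n m ≠ 0
  hir : ∀ n m, g (n+1) m * (g n m + I * g (n+1) (m+1)) = g n (m+1) * (g (n+1) (m+1) + I * g n m)
  re : ∀ n m, Even (n+m) → (starRingEnd ℂ) (g n m) = g n m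
  un : ∀ n m, Odd (n+m) → g n m * (starRingEnd ℂ) (g n m) = 1
  syme : ∀ n m, Even (n+m) → g m n = g n m
  symo : ∀ n m, Odd (n+m) → g m n * g n m = β
  ax : ∀ k, g (2*k) 0 = sAx γ k
  g10 : g 1 0 = 1

lemma hir_unique {a b c d c' : ℂ} (ha : a ≠ 0) (hb : b ≠ 0)
    (h1 : b * (a + I * c) = d * (c + I * a)) (h2 : b * (a + I * c') = d * (c' + I * a)) : c = c' := by
  have hne : I * b - d ≠ 0 := by
    intro h
    have hd : d = I * b := by linear_combination -h
    rw [hd] at h1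
    have : 2 * (a * b) = 0 := by linear_combination h1 + a * b * I_sq
    simp [ha, hb] at this
  have : (I * b - d) * (c - c') = 0 := by linear_combination h1 - h2
  rcases mul_eq_zero.mp this with h | h
  · exact absurd h hne
  · exact sub_eq_zero.mp h

lemma conj_even {a b d c' b' d' : ℂ} (hb : b * b' = 1) (hd : d * d' = 1)
    (H2 : b' * (a + -I * c') = d' * (c' + -I * a)) : b * (a + I * c') = d * (c' + I * a) := by
  have h' : d * (a - I * c') = b * (c' - I * a) := by
    linear_combination b * d * H2 - d * (a - I * c') * hb + b * (c' - I * a) * hd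
  linear_combination -I * h' + (b * a - d * c') * I_sq

lemma conj_odd {a b d c a' c' : ℂ} (ha0 : a ≠ 0) (hb0 : b ≠ 0) (hc0 : c ≠ 0) (ha : a * a' = 1)
    (H : b * (a + I * c) = d * (c + I * a))
    (H2 : b * (a' + -I * c') = d * (c' + -I * a')) : c * c' = 1 := by
  have ha' : a' = a⁻¹ := eq_inv_of_mul_eq_one_right ha
  have ha0' : a' ≠ 0 := by rw [ha']; exact inv_ne_zero ha0
  have : -c' = -c⁻¹ := by
    refine hir_unique ha0' hb0 (d := -d) ?_ ?_
    · linear_combination H2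
    · rw [ha']
      field_simp
      linear_combination -I * H + (b * c * -1 + d * a ) * -1 * I_sq
  rw [neg_inj] at this
  rw [this, mul_inv_cancel₀ hc0]

lemma sym_even {a b d c' b' d' β : ℂ} (hβ : β ≠ 0) (hb : b' * b = β) (hd : d' * d = β)
    (H2 : d' * (a + I * c') = b' * (c' + I * a)) : b * (a + I * c') = d * (c' + I * a) := by
  apply mul_left_cancel₀ hβ
  linear_combination b * d * H2 - b * (a + I * c') * hd + d * (c' + I * a) * hb

lemma sym_odd {a b d c a' c' β : ℂ} (ha0 : a ≠ 0) (ha0' : a' ≠ 0) (hd0 : d ≠ 0) (hc0 : c ≠ 0)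
    (ha : a' * a = β)
    (H : b * (a + I * c) = d * (c + I * a))
    (H2 : d * (a' + I * c') = b * (c' + I * a')) : c' * c = β := by
  have : c' = β / c := by
    refine hir_unique ha0' hd0 H2 ?_
    rw [← ha]
    field_simp
    linear_combination -H
  rw [this, div_mul_cancel₀ _ hc0]

lemma exists_fact (γ : ℝ) (hγ0 : 0 < γ) (hγ2 : γ < 2)
    (α : ℝ) 
    (f : ℕ → ℕ → ℂ)
    (hq : CrossRatioEq f) (hqd : QDenomNonzero f)
    (hc : ConstraintC (γ : ℂ) f) (hcd : CDenomNonzero f)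
    (h00 : f 0 0 = 0) (h10 : f 1 0 = 1)
    (h01 : f 0 1 = Complex.exp (Complex.I * α)) :
    Fac γ (-I * exp (I * α)) f (gF γ f) := by
  set E := exp (I * α) with hE
  have hE0 : E ≠ 0 := exp_ne_zero _
  have hEE : E * (starRingEnd ℂ) E = 1 := by
    rw [hE, ← exp_conj, ← exp_add]; simp
  have axx := axis_aux γ hγ0 hγ2 (fun n => f n 0) 1 one_ne_zero h00 h10
    (fun n => by simpa using (hcd (n+1) 0).1 (by omega))
    (fun n => by simpa using hc (n+1) 0)
  have axy := axis_aux γ hγ0 hγ2 (fun n => f 0 n) E hE0 h00 h01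
    (fun n => by simpa using (hcd 0 (n+1)).2 (by omega))
    (fun n => by simpa using hc 0 (n+1))
  simp only [mul_one] at axx
  have hs : ∀ k, (sAx γ k : ℂ) ≠ 0 := fun k => by exact_mod_cast (sAx_pos γ hγ0 hγ2 k).ne'
  set g := gF γ f with hg
  have ax : ∀ k, g (2*k) 0 = sAx γ k := fun k => by simp [hg, gF]
  have ax1 : ∀ k, g (2*k+1) 0 = 1 := fun k => by simp [hg, gF]
  have nz : ∀ m n, g n m ≠ 0 := by
    intro m
    induction m with
    | zero =>
      intro n
      obtain ⟨k, rfl | rfl⟩ := Nat.even_or_odd' n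
      · rw [ax]; exact hs k
      · rw [ax1]; exact one_ne_zero
    | succ m ih =>
      intro n
      exact div_ne_zero (hqd n m).2 (mul_ne_zero I_ne_zero (ih n))
  have v : ∀ n m, f n (m+1) - f n m = I * g n m * g n (m+1) := by
    intro n m
    show _ = I * g n m * ((f n (m+1) - f n m) / (I * g n m))
    have := nz m n
    field_simp
  have h : ∀ m n, f (n+1) m - f n m = g n m * g (n+1) m := by
    intro m
    induction m with
    | zero =>
      intro n
      obtain ⟨k, rfl | rfl⟩ := Nat.even_or_odd' n
      · rw [ax, ax1, mul_one]; exact (axx k).2.1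
      · rw [ax1, show 2*k+1+1 = 2*(k+1) by ring, ax, one_mul]; exact (axx k).2.2
    | succ m ih =>
      intro n
      have e := hq n m
      have e1 := ih n
      have e2 := v n m
      have e3 := v (n+1) m
      have n1 := nz m n
      have n2 := nz m (n+1)
      have : (g n m * g (n+1) m) * (f (n+1) (m+1) - f n (m+1) - g n (m+1) * g (n+1) (m+1)) = 0 := by
        have e' : -(f (n+1) m - f n m) * (f (n+1) (m+1) - f n (m+1)) = (f (n+1) (m+1) - f (n+1) m) * (f n (m+1) - f n m) := by
          linear_combination e
        rw [e1, e2, e3] at e'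
        linear_combination -e' - (g n m * g (n+1) m) * (g n (m+1) * g (n+1) (m+1)) * I_sq
      have := (mul_eq_zero.mp this).resolve_left (mul_ne_zero n1 n2)
      linear_combination this
  have hir : ∀ n m, g (n+1) m * (g n m + I * g (n+1) (m+1)) = g n (m+1) * (g (n+1) (m+1) + I * g n m) := by
    intro n m
    linear_combination -h m n - v (n+1) m + v n m + h (m+1) n
  have ay : ∀ k, g 0 (2*k) = sAx γ k ∧ g 0 (2*k+1) = -I * E := by
    intro k
    have st : ∀ k, g 0 (2*k) = sAx γ k → g 0 (2*k+1) = -I * E := by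
      intro k hk
      have e1 := v 0 (2*k)
      have e2 : f 0 (2*k+1) - f 0 (2*k) = _ := (axy k).2.1
      rw [e2, hk] at e1
      have : (sAx γ k : ℂ) * (g 0 (2*k+1) + I * E) = 0 := by
        linear_combination I * e1 + sAx γ k * g 0 (2*k+1) * I_sq 
      have := (mul_eq_zero.mp this).resolve_left (hs k)
      linear_combination this
    induction k with
    | zero => 
      have : g 0 (2*0) = sAx γ 0 := ax 0
      exact ⟨this, st 0 this⟩
    | succ k ih =>
      have : g 0 (2*(k+1)) = sAx γ (k+1) := by
        have e1 := v 0 (2*k+1)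
        have e2 : f 0 (2*k+2) - f 0 (2*k+1) = _ := (axy k).2.2
        rw [show 2*k+1+1 = 2*k+2 by ring, e2, ih.2] at e1
        have : E * (g 0 (2*k+2) - sAx γ (k+1)) = 0 := by
          linear_combination -e1 + E * g 0 (2*k+2) * I_sq
        have := (mul_eq_zero.mp this).resolve_left hE0
        rw [show 2*(k+1) = 2*k+2 by ring]
        linear_combination this
      exact ⟨this, st _ this⟩
  have RU : ∀ m n, (Even (n+m) → (starRingEnd ℂ) (g n m) = g n m) ∧ (Odd (n+m) → g n m * (starRingEnd ℂ) (g n m) = 1) := by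
    intro m
    induction m with
    | zero =>
      intro n
      obtain ⟨k, rfl | rfl⟩ := Nat.even_or_odd' n
      · rw [ax]; simp
      · rw [ax1]; simp
    | succ m ih =>
      intro n
      induction n with
      | zero =>
        obtain ⟨k, hk | hk⟩ := Nat.even_or_odd' (m+1)
        · rw [hk, (ay k).1]; simp
        · rw [hk, (ay k).2]; simp
          linear_combination hEE - E * (starRingEnd ℂ) E * I_sq
      | succ n ihn =>
        have H := hir n m
        have H2 := congrArg (starRingEnd ℂ) H
        simp only [map_mul, map_add, conj_I] at H2
        constructor
        · intro hp
          have ha := (ih n).1 (by rcases hp with ⟨t, ht⟩; exact ⟨t-1, by omega⟩)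
          have hb := (ih (n+1)).2 (by rcases hp with ⟨t, ht⟩; exact ⟨t-1, by omega⟩)
          have hd := ihn.2 (by rcases hp with ⟨t, ht⟩; exact ⟨t-1, by omega⟩)
          rw [ha] at H2
          refine hir_unique (nz m n) (nz m (n+1)) (d := g n (m+1)) ?_ H
          exact conj_even hb hd H2
        · intro hp
          have ha := (ih n).2 (by rcases hp with ⟨t, ht⟩; exact ⟨t-1, by omega⟩)
          have hb := (ih (n+1)).1 (by rcases hp with ⟨t, ht⟩; exact ⟨t, by omega⟩)
          have hd := ihn.1 (by rcases hp with ⟨t, ht⟩; exact ⟨t, by omega⟩)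
          rw [hb, hd] at H2
          exact conj_odd (nz m n) (nz m (n+1)) (nz (m+1) (n+1)) ha H H2
  have SY : ∀ m n, (Even (n+m) → g m n = g n m) ∧ (Odd (n+m) → g m n * g n m = -I * E) := by
    intro m
    induction m with
    | zero =>
      intro n
      obtain ⟨k, rfl | rfl⟩ := Nat.even_or_odd' n
      · rw [ax, (ay k).1]; simp
      · rw [ax1, (ay k).2]; simp
    | succ m ih =>
      intro n
      induction n with
      | zero =>
        obtain ⟨k, hk | hk⟩ := Nat.even_or_odd' (m+1)
        · rw [hk, (ay k).1, ax]; simp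
        · rw [hk, (ay k).2, ax1]; simp
      | succ n ihn =>
        have H := hir n m
        have H2 := hir m n
        constructor
        · intro hp
          have ha := (ih n).1 (by rcases hp with ⟨t, ht⟩; exact ⟨t-1, by omega⟩)
          have hb := (ih (n+1)).2 (by rcases hp with ⟨t, ht⟩; exact ⟨t-1, by omega⟩)
          have hd := ihn.2 (by rcases hp with ⟨t, ht⟩; exact ⟨t-1, by omega⟩)
          rw [ha] at H2
          refine hir_unique (nz m n) (nz m (n+1)) (d := g n (m+1)) ?_ H
          exact sym_even (mul_ne_zero (neg_ne_zero.mpr I_ne_zero) hE0) hb hd H2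
        · intro hp
          have ha := (ih n).2 (by rcases hp with ⟨t, ht⟩; exact ⟨t-1, by omega⟩)
          have hb := (ih (n+1)).1 (by rcases hp with ⟨t, ht⟩; exact ⟨t, by omega⟩)
          have hd := ihn.1 (by rcases hp with ⟨t, ht⟩; exact ⟨t, by omega⟩)
          rw [hb, hd] at H2
          exact sym_odd (nz m n) (nz n m) (nz (m+1) n) (nz (m+1) (n+1)) (by rw [ha]) H H2
  exact ⟨fun n m => h m n, v, fun n m => nz m n, hir, fun n m => (RU m n).1, fun n m => (RU m n).2,
    fun n m => (SY m n).1, fun n m => (SY m n).2, ax, ax1 0⟩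

/-! ## geometry of adjacent kites -/

lemma tri_mem {A : Set ℂ} {p e : ℂ} {a b : ℝ} (he : e * (starRingEnd ℂ) e = 1)
    (ha : a ≠ 0) (hb : b ≠ 0) (h1 : p ∈ A) (h2 : p + a * e ∈ A) (h3 : p + I * b * e ∈ A) {z : ℂ}
    (hs : 0 < ((z - p) * (starRingEnd ℂ) e).re / a) (ht : 0 < ((z - p) * (starRingEnd ℂ) e).im / b)
    (hst : ((z - p) * (starRingEnd ℂ) e).re / a + ((z - p) * (starRingEnd ℂ) e).im / b < 1) :
    z ∈ convexHull ℝ A := by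
  set q := (z - p) * (starRingEnd ℂ) e with hq
  have hz : z = p + q * e := by
    rw [hq]; linear_combination (-(z - p)) * he
  have hmem : (1 - q.re / a - q.im / b) • p + (q.re / a) • (p + a * e) + (q.im / b) • (p + I * b * e)
      ∈ convexHull ℝ A := by
    have hcv := convex_convexHull ℝ A
    have i1 := subset_convexHull ℝ A h1
    have i2 := subset_convexHull ℝ A h2
    have i3 := subset_convexHull ℝ A h3
    have := hcv.sum_mem (t := Finset.univ) (w := ![1 - q.re / a - q.im / b, q.re / a, q.im / b])
      (z := ![p, p + a * e, p + I * b * e]) ?_ ?_ ?_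
    · simpa [Fin.sum_univ_three, -smul_add] using this
    · intro i _
      fin_cases i <;> simp <;> linarith
    · simp [Fin.sum_univ_three]; ring
    · intro i _
      fin_cases i <;> simp <;> assumption
  convert hmem using 1
  have hac : (a : ℂ) ≠ 0 := by exact_mod_cast ha
  have hbc : (b : ℂ) ≠ 0 := by exact_mod_cast hb
  simp only [real_smul]
  push_cast
  rw [hz]
  field_simp
  linear_combination (a * e * b) * (-(re_add_im q)) 

lemma overlap {A B : Set ℂ} {p e : ℂ} {a a' b : ℝ} (he : e * (starRingEnd ℂ) e = 1)
    (haa : 0 < a * a') (hb : b ≠ 0) (h1 : p ∈ A) (h2 : p + a * e ∈ A) (h3 : p + I * b * e ∈ A)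
    (h1' : p ∈ B) (h2' : p + a' * e ∈ B) (h3' : p + I * b * e ∈ B) :
    ¬ Disjoint (interior (convexHull ℝ A)) (interior (convexHull ℝ B)) := by
  have ha : a ≠ 0 := by rintro rfl; simp at haa
  have ha' : a' ≠ 0 := by rintro rfl; simp at haa
  let X : ℂ → ℝ := fun z => ((z - p) * (starRingEnd ℂ) e).re
  let Y : ℂ → ℝ := fun z => ((z - p) * (starRingEnd ℂ) e).im
  have cX : Continuous X := by fun_prop
  have cY : Continuous Y := by fun_prop
  have open1 : ∀ a : ℝ, IsOpen {z | 0 < X z / a ∧ 0 < Y z / b ∧ X z / a + Y z / b < 1} := by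
    intro a
    have c1 : Continuous (fun z => X z / a) := cX.div_const a
    have c2 : Continuous (fun z => Y z / b) := cY.div_const b
    exact (isOpen_lt continuous_const c1).inter
      ((isOpen_lt continuous_const c2).inter (isOpen_lt (c1.add c2) continuous_const))
  have s1 : {z | 0 < X z / a ∧ 0 < Y z / b ∧ X z / a + Y z / b < 1} ⊆ interior (convexHull ℝ A) :=
    interior_maximal (fun z hz => tri_mem he ha hb h1 h2 h3 hz.1 hz.2.1 hz.2.2) (open1 a)
  have s2 : {z | 0 < X z / a' ∧ 0 < Y z / b ∧ X z / a' + Y z / b < 1} ⊆ interior (convexHull ℝ B) :=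
    interior_maximal (fun z hz => tri_mem he ha' hb h1' h2' h3' hz.1 hz.2.1 hz.2.2) (open1 a')
  have hq : 0 < a / a' := by
    have : a / a' = (a * a') / a' ^ 2 := by field_simp
    rw [this]; positivity
  set q := a / a' with hqd
  let ε : ℝ := 1 / (3 * (1 + q))
  let z : ℂ := p + (((ε * a : ℝ) : ℂ) + ((b / 3 : ℝ) : ℂ) * I) * e
  have hz : (z - p) * (starRingEnd ℂ) e = ((ε * a : ℝ) : ℂ) + ((b / 3 : ℝ) : ℂ) * I := by
    simp only [z]; linear_combination (((ε * a : ℝ) : ℂ) + ((b / 3 : ℝ) : ℂ) * I) * he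
  have hX : X z = ε * a := by
    simp only [X]; rw [hz]; simp
  have hY : Y z = b / 3 := by
    simp only [Y]; rw [hz]; simp
  have e0 : 0 < ε := by positivity
  have e1 : ε ≤ 1/3 := by
    simp only [ε]
    rw [div_le_div_iff₀ (by positivity) (by norm_num)]; linarith
  have e2 : ε * q ≤ 1/3 := by
    simp only [ε]
    rw [div_mul_eq_mul_div, div_le_div_iff₀ (by positivity) (by norm_num)]; linarith
  have x1 : X z / a = ε := by rw [hX]; field_simp
  have x2 : X z / a' = ε * q := by rw [hX, hqd]; field_simp
  have y1 : Y z / b = 1/3 := by rw [hY]; field_simp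
  refine Set.not_disjoint_iff.mpr ⟨z, s1 ?_, s2 ?_⟩
  · simp only [Set.mem_ofPred_eq, x1, y1]
    refine ⟨e0, by norm_num, by linarith⟩
  · simp only [Set.mem_ofPred_eq, x2, y1]
    refine ⟨by positivity, by norm_num, by linarith⟩

lemma separated {A B : Set ℂ} {p e : ℂ} (he : e * (starRingEnd ℂ) e = 1)
    (hA : ∀ z ∈ A, ((z - p) * (starRingEnd ℂ) e).re ≤ 0)
    (hB : ∀ z ∈ B, 0 ≤ ((z - p) * (starRingEnd ℂ) e).re) :
    Disjoint (interior (convexHull ℝ A)) (interior (convexHull ℝ B)) := by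
  have lin : IsLinearMap ℝ (fun z : ℂ => (z * (starRingEnd ℂ) e).re) := by
    constructor
    · intro x y; simp [add_mul]
    · intro c x; simp; ring
  have hA' : convexHull ℝ A ⊆ {z | (z * (starRingEnd ℂ) e).re ≤ (p * (starRingEnd ℂ) e).re} := by
    refine convexHull_min ?_ (convex_halfSpace_le lin _)
    intro z hz
    have := hA z hz
    rw [sub_mul, sub_re] at this
    simpa using this
  have hB' : convexHull ℝ B ⊆ {z | (p * (starRingEnd ℂ) e).re ≤ (z * (starRingEnd ℂ) e).re} := by
    refine convexHull_min ?_ (convex_halfSpace_ge lin _)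
    intro z hz
    have := hB z hz
    rw [sub_mul, sub_re] at this
    simpa using this
  rw [Set.disjoint_left]
  intro z hzA hzB
  have hz : z ∈ interior (convexHull ℝ A) ∩ interior (convexHull ℝ B) := ⟨hzA, hzB⟩
  have ho : IsOpen (interior (convexHull ℝ A) ∩ interior (convexHull ℝ B)) :=
    isOpen_interior.inter isOpen_interior
  have hcont : Continuous (fun t : ℝ => z + t * e) := by fun_prop
  have hev : ∀ᶠ t : ℝ in nhds 0, z + t * e ∈ interior (convexHull ℝ A) ∩ interior (convexHull ℝ B) := by
    apply hcont.continuousAt.eventually_mem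
    apply ho.mem_nhds
    simpa using hz
  obtain ⟨δ, hδ, hball⟩ := Metric.eventually_nhds_iff.mp hev
  have h1 := hball (y := δ/2) (by simp [abs_of_pos hδ]; linarith)
  have h2 := hA' (interior_subset h1.1)
  have h3 := hB' (interior_subset hzB)
  simp only [Set.mem_ofPred_eq] at h2 h3
  have : (z + ((δ/2 : ℝ) : ℂ) * e) * (starRingEnd ℂ) e = z * (starRingEnd ℂ) e + ((δ/2 : ℝ) : ℂ) := by
    linear_combination ((δ/2 : ℝ) : ℂ) * he
  rw [this, add_re, ofReal_re] at h2
  linarith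

def KiteAt (S : Set ℂ) (p e : ℂ) (H V : ℝ) : Prop :=
  ∃ w : ℂ, (w - p) * (V - H * I) = 2 * H * V * e ∧
    S = {z | z = p ∨ z = p + H * e ∨ z = p + I * V * e ∨ z = w}

lemma KiteAt.rot {S : Set ℂ} {p e : ℂ} {H V : ℝ} (h : KiteAt S p e H V) :
    KiteAt S p (I * e) V (-H) := by
  obtain ⟨w, hw, rfl⟩ := h
  refine ⟨w, ?_, ?_⟩
  · push_cast; linear_combination (-I) * hw + (w - p) * (-H) * I_sq
  · ext z
    simp only [Set.mem_ofPred_eq]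
    have e1 : p + V * (I * e) = p + I * V * e := by ring
    have e2 : p + I * ((-H : ℝ) : ℂ) * (I * e) = p + H * e := by
      push_cast; linear_combination (-H * e) * I_sq
    rw [e1, e2]
    tauto

lemma KiteAt.sgn {S : Set ℂ} {p e : ℂ} {H V : ℝ} (he : e * (starRingEnd ℂ) e = 1) (hV : V ≠ 0)
    (h : KiteAt S p e H V) {z : ℂ} (hz : z ∈ S) :
    ∃ t : ℝ, 0 ≤ t ∧ ((z - p) * (starRingEnd ℂ) e).re = t * H := by
  obtain ⟨w, hw, rfl⟩ := h
  rcases hz with h | h | h | h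
  · exact ⟨0, le_refl _, by simp [h]⟩
  · refine ⟨1, by norm_num, ?_⟩
    have : (z - p) * (starRingEnd ℂ) e = H := by rw [h]; linear_combination H * he
    rw [this]; simp
  · refine ⟨0, by norm_num, ?_⟩
    have : (z - p) * (starRingEnd ℂ) e = I * V := by rw [h]; linear_combination I * V * he
    rw [this]; simp
  · subst h
    set q := (z - p) * (starRingEnd ℂ) e with hq
    have h1 : q * (V - H * I) = 2 * H * V := by
      rw [hq]; linear_combination (starRingEnd ℂ) e * hw + 2 * H * V * he
    have h2 := congrArg re h1
    have h3 := congrArg im h1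
    simp at h2 h3
    refine ⟨2 * V ^ 2 / (H ^ 2 + V ^ 2), by positivity, ?_⟩
    have : H ^ 2 + V ^ 2 ≠ 0 := by positivity
    field_simp
    linear_combination V * h2 - H * h3

lemma KiteAt.disj {S S' : Set ℂ} {p e : ℂ} {H H' V : ℝ} (he : e * (starRingEnd ℂ) e = 1)
    (hV : V ≠ 0) (h : KiteAt S p e H V) (h' : KiteAt S' p e H' V) (hH : H < 0) (hH' : 0 < H') :
    Disjoint (interior (convexHull ℝ S)) (interior (convexHull ℝ S')) := by
  refine separated he (p := p) ?_ ?_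
  · intro z hz
    obtain ⟨t, ht, e⟩ := h.sgn he hV hz
    rw [e]; nlinarith
  · intro z hz
    obtain ⟨t, ht, e⟩ := h'.sgn he hV hz
    rw [e]; positivity

lemma KiteAt.opp {S S' : Set ℂ} {p e : ℂ} {H H' V : ℝ} (he : e * (starRingEnd ℂ) e = 1)
    (hV : V ≠ 0) (h : KiteAt S p e H V) (h' : KiteAt S' p e H' V)
    (hd : Disjoint (interior (convexHull ℝ S)) (interior (convexHull ℝ S'))) : H * H' ≤ 0 := by
  by_contra hcon
  push Not at hcon
  obtain ⟨w, -, rfl⟩ := h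
  obtain ⟨w', -, rfl⟩ := h'
  refine overlap (p := p) he hcon hV ?_ ?_ ?_ ?_ ?_ ?_ hd <;> simp

section
variable {γ : ℝ} {β : ℂ} {f g : ℕ → ℕ → ℂ}

lemma Fac.real (F : Fac γ β f g) {n m : ℕ} (h : Even (n+m)) : g n m = ((g n m).re : ℂ) :=
  (conj_eq_iff_re.mp (F.re n m h)).symm

lemma Fac.rnz (F : Fac γ β f g) {n m : ℕ} (h : Even (n+m)) : (g n m).re ≠ 0 := by
  intro h0
  have := F.real h
  rw [h0] at this
  exact F.nz n m (by simpa using this)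

lemma Fac.kb (F : Fac γ β f g) {n m : ℕ} (h : Even (n+m)) :
    KiteAt (quadVerts f n m) (f (n+1) m) (g (n+1) m) (-(g n m).re) (g (n+1) (m+1)).re := by
  have ra := F.real h
  have rc := F.real (n := n+1) (m := m+1) (by rcases h with ⟨t, ht⟩; exact ⟨t+1, by omega⟩)
  have hir := F.hir n m
  have h1 := F.h n m
  have v1 := F.v n m
  have v2 := F.v (n+1) m
  refine ⟨f n (m+1), ?_, ?_⟩
  · push_cast
    rw [← ra, ← rc]
    have : f n (m+1) - f (n+1) m = I * g n m * g n (m+1) - g n m * g (n+1) m := by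
      linear_combination v1 - h1
    rw [this]
    linear_combination (-I * g n m) * hir + g n m * g (n+1) m * g (n+1) (m+1) * I_sq
  · push_cast
    rw [← ra, ← rc]
    have e1 : f (n+1) m + -g n m * g (n+1) m = f n m := by linear_combination h1
    have e2 : f (n+1) m + I * g (n+1) (m+1) * g (n+1) m = f (n+1) (m+1) := by linear_combination -v2
    rw [e1, e2]
    ext z; simp only [quadVerts, Set.mem_insert_iff, Set.mem_singleton_iff, Set.mem_ofPred_eq]; tauto

lemma Fac.kd (F : Fac γ β f g) {n m : ℕ} (h : Even (n+m)) :
    KiteAt (quadVerts f n m) (f n (m+1)) (g n (m+1)) (g (n+1) (m+1)).re (-(g n m).re) := by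
  have ra := F.real h
  have rc := F.real (n := n+1) (m := m+1) (by rcases h with ⟨t, ht⟩; exact ⟨t+1, by omega⟩)
  have hir := F.hir n m
  have h1 := F.h n m
  have v1 := F.v n m
  have h2 := F.h n (m+1)
  refine ⟨f (n+1) m, ?_, ?_⟩
  · push_cast
    rw [← ra, ← rc]
    have : f (n+1) m - f n (m+1) = g n m * g (n+1) m - I * g n m * g n (m+1) := by
      linear_combination h1 - v1
    rw [this]
    linear_combination (-g n m) * hir + g n m * g n (m+1) * g (n+1) (m+1) * I_sq
  · push_cast
    rw [← ra, ← rc]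
    have e1 : f n (m+1) + g (n+1) (m+1) * g n (m+1) = f (n+1) (m+1) := by linear_combination -h2
    have e2 : f n (m+1) + I * -g n m * g n (m+1) = f n m := by linear_combination v1
    rw [e1, e2]
    ext z; simp only [quadVerts, Set.mem_insert_iff, Set.mem_singleton_iff, Set.mem_ofPred_eq]; tauto

lemma Fac.ka (F : Fac γ β f g) {n m : ℕ} (h : Odd (n+m)) :
    KiteAt (quadVerts f n m) (f n m) (g n m) (g (n+1) m).re (g n (m+1)).re := by
  have rb := F.real (n := n+1) (m := m) (by rcases h with ⟨t, ht⟩; exact ⟨t+1, by omega⟩)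
  have rd := F.real (n := n) (m := m+1) (by rcases h with ⟨t, ht⟩; exact ⟨t+1, by omega⟩)
  have hir := F.hir n m
  have h1 := F.h n m
  have v1 := F.v n m
  have v2 := F.v (n+1) m
  refine ⟨f (n+1) (m+1), ?_, ?_⟩
  · rw [← rb, ← rd]
    have : f (n+1) (m+1) - f n m = g n m * g (n+1) m + I * g (n+1) m * g (n+1) (m+1) := by
      linear_combination h1 + v2
    rw [this]
    linear_combination (-I * g (n+1) m) * hir - g n m * g (n+1) m * g n (m+1) * I_sq
  · rw [← rb, ← rd]
    have e1 : f n m + g (n+1) m * g n m = f (n+1) m := by linear_combination -h1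
    have e2 : f n m + I * g n (m+1) * g n m = f n (m+1) := by linear_combination -v1
    rw [e1, e2]
    ext z; simp only [quadVerts, Set.mem_insert_iff, Set.mem_singleton_iff, Set.mem_ofPred_eq]; tauto

lemma Fac.kc (F : Fac γ β f g) {n m : ℕ} (h : Odd (n+m)) :
    KiteAt (quadVerts f n m) (f (n+1) (m+1)) (g (n+1) (m+1)) (-(g n (m+1)).re) (-(g (n+1) m).re) := by
  have rb := F.real (n := n+1) (m := m) (by rcases h with ⟨t, ht⟩; exact ⟨t+1, by omega⟩)
  have rd := F.real (n := n) (m := m+1) (by rcases h with ⟨t, ht⟩; exact ⟨t+1, by omega⟩)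
  have hir := F.hir n m
  have h1 := F.h n m
  have h2 := F.h n (m+1)
  have v2 := F.v (n+1) m
  refine ⟨f n m, ?_, ?_⟩
  · push_cast
    rw [← rb, ← rd]
    have : f n m - f (n+1) (m+1) = -(g n m * g (n+1) m + I * g (n+1) m * g (n+1) (m+1)) := by
      linear_combination -h1 - v2
    rw [this]
    linear_combination (g (n+1) m) * hir - g (n+1) (m+1) * g (n+1) m * g n (m+1) * I_sq
  · push_cast
    rw [← rb, ← rd]
    have e1 : f (n+1) (m+1) + -g n (m+1) * g (n+1) (m+1) = f n (m+1) := by linear_combination h2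
    have e2 : f (n+1) (m+1) + I * -g (n+1) m * g (n+1) (m+1) = f (n+1) m := by linear_combination v2
    rw [e1, e2]
    ext z; simp only [quadVerts, Set.mem_insert_iff, Set.mem_singleton_iff, Set.mem_ofPred_eq]; tauto

lemma unit_I_mul {e : ℂ} (he : e * (starRingEnd ℂ) e = 1) :
    (I * e) * (starRingEnd ℂ) (I * e) = 1 := by
  simp only [map_mul, conj_I]
  linear_combination he - e * (starRingEnd ℂ) e * I_sq

lemma Fac.immersion_of_pos (F : Fac γ β f g)
    (hpos : ∀ n m, Even (n+m) → 0 < (g n m).re) : IsImmersion f := by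
  intro n m
  rcases Nat.even_or_odd (n+m) with h | h
  · have hc : Even (n+1+(m+1)) := by rcases h with ⟨t, ht⟩; exact ⟨t+1, by omega⟩
    have hr : Even (n+1+1+m) := by rcases h with ⟨t, ht⟩; exact ⟨t+1, by omega⟩
    have hu : Even (n+(m+1+1)) := by rcases h with ⟨t, ht⟩; exact ⟨t+1, by omega⟩
    have ob : Odd (n+1+m) := by rcases h with ⟨t, ht⟩; exact ⟨t, by omega⟩
    have od : Odd (n+(m+1)) := by rcases h with ⟨t, ht⟩; exact ⟨t, by omega⟩
    constructor
    · exact KiteAt.disj (F.un _ _ ob) (F.rnz hc) (F.kb h) (F.ka ob)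
        (neg_lt_zero.mpr (hpos _ _ h)) (hpos _ _ hr)
    · exact KiteAt.disj (unit_I_mul (F.un _ _ od)) (neg_ne_zero.mpr (F.rnz hc)) (F.kd h).rot (F.ka od).rot
        (neg_lt_zero.mpr (hpos _ _ h)) (hpos _ _ hu)
  · have hb : Even (n+1+m) := by rcases h with ⟨t, ht⟩; exact ⟨t+1, by omega⟩
    have hd : Even (n+(m+1)) := by rcases h with ⟨t, ht⟩; exact ⟨t+1, by omega⟩
    have hr : Even (n+1+1+(m+1)) := by rcases h with ⟨t, ht⟩; exact ⟨t+2, by omega⟩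
    have hu : Even (n+1+(m+1+1)) := by rcases h with ⟨t, ht⟩; exact ⟨t+2, by omega⟩
    have oc : Odd (n+1+(m+1)) := by rcases h with ⟨t, ht⟩; exact ⟨t+1, by omega⟩
    constructor
    · exact KiteAt.disj (F.un _ _ oc) (neg_ne_zero.mpr (F.rnz hb)) (F.kc h) (F.kd hb)
        (neg_lt_zero.mpr (hpos _ _ hd)) (hpos _ _ hr)
    · exact KiteAt.disj (unit_I_mul (F.un _ _ oc)) (neg_ne_zero.mpr (neg_ne_zero.mpr (F.rnz hd)))
        (F.kc h).rot (F.kb hd).rot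
        (neg_lt_zero.mpr (hpos _ _ hb)) (hpos _ _ hu)

lemma Fac.pos_of_immersion (F : Fac γ β f g) (h00 : 0 < (g 0 0).re) (h11 : 0 < (g 1 1).re)
    (him : IsImmersion f) :
    ∀ n m, Even (n+m) → 0 < (g n m).re := by
  have hor : ∀ n m, Even (n+m) → 0 < (g n m).re → 0 < (g (n+2) m).re := by
    intro n m h hp
    have hc : Even (n+1+(m+1)) := by rcases h with ⟨t, ht⟩; exact ⟨t+1, by omega⟩
    have hr : Even (n+1+1+m) := by rcases h with ⟨t, ht⟩; exact ⟨t+1, by omega⟩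
    have ob : Odd (n+1+m) := by rcases h with ⟨t, ht⟩; exact ⟨t, by omega⟩
    have := KiteAt.opp (F.un _ _ ob) (F.rnz hc) (F.kb h) (F.ka ob) (him n m).1
    have h2 := F.rnz hr
    rcases lt_or_gt_of_ne h2 with h3 | h3
    · nlinarith
    · exact h3
  have ver : ∀ n m, Even (n+m) → 0 < (g n m).re → 0 < (g n (m+2)).re := by
    intro n m h hp
    have hc : Even (n+1+(m+1)) := by rcases h with ⟨t, ht⟩; exact ⟨t+1, by omega⟩
    have hu : Even (n+(m+1+1)) := by rcases h with ⟨t, ht⟩; exact ⟨t+1, by omega⟩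
    have od : Odd (n+(m+1)) := by rcases h with ⟨t, ht⟩; exact ⟨t, by omega⟩
    have := KiteAt.opp (unit_I_mul (F.un _ _ od)) (neg_ne_zero.mpr (F.rnz hc)) (F.kd h).rot (F.ka od).rot (him n m).2
    have h2 := F.rnz hu
    rcases lt_or_gt_of_ne h2 with h3 | h3
    · nlinarith
    · exact h3
  have row0 : ∀ k, 0 < (g (2*k) 0).re := by
    intro k
    induction k with
    | zero => exact h00
    | succ k ih => exact hor (2*k) 0 (by simp) ih
  have row1 : ∀ k, 0 < (g (2*k+1) 1).re := by
    intro k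
    induction k with
    | zero => exact h11
    | succ k ih => exact hor (2*k+1) 1 ⟨k+1, by omega⟩ ih
  have col : ∀ j k, 0 < (g (2*k) (2*j)).re ∧ 0 < (g (2*k+1) (2*j+1)).re := by
    intro j
    induction j with
    | zero => intro k; exact ⟨row0 k, row1 k⟩
    | succ j ih =>
      intro k
      exact ⟨ver (2*k) (2*j) ⟨k+j, by omega⟩ (ih k).1, ver (2*k+1) (2*j+1) ⟨k+j+1, by omega⟩ (ih k).2⟩
  intro n m h
  obtain ⟨k, rfl | rfl⟩ := Nat.even_or_odd' n <;> obtain ⟨j, rfl | rfl⟩ := Nat.even_or_odd' m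
  · exact (col j k).1
  · rcases h with ⟨t, ht⟩; omega
  · rcases h with ⟨t, ht⟩; omega
  · exact (col j k).2

end

/-! ## the four-point equation -/

section
variable {γ : ℝ} {β : ℂ} {f g : ℕ → ℕ → ℂ}

lemma half_re {e eL : ℂ} (he : e * (starRingEnd ℂ) e = 1) (hL : eL * (starRingEnd ℂ) eL = 1)
    (hs : e + eL ≠ 0) : ((starRingEnd ℂ) e * (e * eL / (e + eL))).re = 1/2 := by
  have he0 : e ≠ 0 := left_ne_zero_of_mul_eq_one he
  have hL0 : eL ≠ 0 := left_ne_zero_of_mul_eq_one hL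
  have h1 : (starRingEnd ℂ) e = e⁻¹ := eq_inv_of_mul_eq_one_right he
  have h2 : (starRingEnd ℂ) eL = eL⁻¹ := eq_inv_of_mul_eq_one_right hL
  set y := (starRingEnd ℂ) e * (e * eL / (e + eL)) with hy
  have hs' : eL + e ≠ 0 := by rwa [add_comm]
  have y1 : y = eL / (e + eL) := by
    rw [hy, h1]; field_simp
  have y2 : (starRingEnd ℂ) y = e / (e + eL) := by
    rw [y1]
    simp only [map_div₀, map_add, h1, h2]
    have : e⁻¹ + eL⁻¹ = (e + eL) / (e * eL) := by field_simp; ring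
    rw [this]
    field_simp
  have y3 : y + (starRingEnd ℂ) y = 1 := by
    rw [y2, y1]; field_simp; ring
  have := congrArg re y3
  simp at this
  linarith

lemma vert_id {e eU eD : ℂ} {l u d : ℝ} (hl : l ≠ 0) (hud : (u:ℂ) + d ≠ 0) (hs : eU + eD ≠ 0)
    (h1 : e * (l + I * u) = eU * (u + I * l)) (h2 : d * (eD + I * e) = l * (e + I * eD)) :
    eU * eD / (eU + eD) = e * ((l + I * u) * (l - I * d)) / (2 * l * (u + d)) := by
  have hlc : (l:ℂ) ≠ 0 := by exact_mod_cast hl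
  rw [div_eq_div_iff hs (by simp [hlc, hud])]
  have h2' : e * (l - I * d) = eD * (d - I * l) := by linear_combination -h2
  linear_combination (-(l - I * d) * eD) * h1 - ((l + I * u) * eU) * h2' + (eU * eD * l * (u + d)) * I_sq

lemma Fac.four (F : Fac γ β f g) (hc : ConstraintC (γ : ℂ) f) (hcd : CDenomNonzero f)
    (k j : ℕ) (hp : Odd (k+j)) :
    (g (k+2) (j+1)).re * ((k+j+3-γ) * (g (k+1) (j+2)).re + (k-j+1-γ) * (g (k+1) j).re) =
    (g k (j+1)).re * ((k+j+1+γ) * (g (k+1) j).re + (k-j-1+γ) * (g (k+1) (j+2)).re) := by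
  have rr := F.real (n := k+2) (m := j+1) (by rcases hp with ⟨t, ht⟩; exact ⟨t+2, by omega⟩)
  have ru := F.real (n := k+1) (m := j+2) (by rcases hp with ⟨t, ht⟩; exact ⟨t+2, by omega⟩)
  have hle : Even (k+(j+1)) := by rcases hp with ⟨t, ht⟩; exact ⟨t+1, by omega⟩
  have rl := F.real hle
  have hl := F.rnz hle
  have rd := F.real (n := k+1) (m := j) (by rcases hp with ⟨t, ht⟩; exact ⟨t+1, by omega⟩)
  have he := F.un (k+1) (j+1) (by rcases hp with ⟨t, ht⟩; exact ⟨t+1, by omega⟩)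
  have fr := F.h (k+1) (j+1)
  have fl := F.h k (j+1)
  have fu := F.v (k+1) (j+1)
  have fd := F.v (k+1) j
  have flu := F.v k (j+1)
  have fld := F.v k j
  have H1 := F.hir k (j+1)
  have H2 := F.hir k j
  have cp := hc (k+1) (j+1)
  have cl := hc k (j+1)
  have dp := (hcd (k+1) (j+1)).1 (by omega)
  have dq := (hcd (k+1) (j+1)).2 (by omega)
  have dl := (hcd k (j+1)).2 (by omega)
  have ne := F.nz (k+1) (j+1)
  simp only [Nat.add_sub_cancel, Nat.succ_ne_zero, if_false] at cp cl dp dq dl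
  rw [show k+1+1 = k+2 by ring] at fr cp dp
  rw [show j+1+1 = j+2 by ring] at fu flu cp dq H1 cl dl
  rw [rr] at fr
  rw [rl] at fl flu H1 H2
  rw [ru] at fu H1
  rw [rd] at fd H2
  rw [rl] at fld
  set e := g (k+1) (j+1)
  set eU := g k (j+2)
  set eD := g k j
  set r := (g (k+2) (j+1)).re
  set l := (g k (j+1)).re
  set u := (g (k+1) (j+2)).re
  set d := (g (k+1) j).re
  have hlc : (l:ℂ) ≠ 0 := by exact_mod_cast hl
  have e1 : f (k+2) (j+1) - f k (j+1) = (r + l) * e := by linear_combination fr + fl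
  have e2 : f (k+1) (j+2) - f (k+1) j = I * ((u + d) * e) := by linear_combination fu + fd
  have e3 : f k (j+2) - f k j = I * (l * (eU + eD)) := by linear_combination flu + fld
  rw [e1] at dp
  rw [e2] at dq
  rw [e3] at dl
  have hrl : (r:ℂ) + l ≠ 0 := left_ne_zero_of_mul dp
  have hud : (u:ℂ) + d ≠ 0 := left_ne_zero_of_mul (right_ne_zero_of_mul dq)
  have hUD : eU + eD ≠ 0 := right_ne_zero_of_mul (right_ne_zero_of_mul dl)
  rw [e1, e2, fr, fl, fu, fd] at cp
  rw [e3, flu, fld, fl] at cl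
  push_cast at cp cl
  have cp' : (γ:ℂ) * f (k+1) (j+1) =
      e * (2 * (k+1) * (r * l / (r + l)) + I * (2 * (j+1) * (u * d / (u + d)))) := by
    rw [cp]; field_simp
  have V := vert_id hl hud hUD H1 H2
  have vterm : 2 * ((j:ℂ) + 1) * (I * l * eU * (I * eD * l)) / (I * (l * (eU + eD))) =
      e * (I * ((j+1) * ((l + I * u) * (l - I * d)) / (u + d))) := by
    have : 2 * ((j:ℂ) + 1) * (I * l * eU * (I * eD * l)) / (I * (l * (eU + eD))) =
      2 * (j+1) * I * l * (eU * eD / (eU + eD)) := by field_simp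
    rw [this, V]; field_simp
  rw [vterm] at cl
  have hterm : ∃ t : ℂ, (if k = 0 then 0 else
      2 * (k:ℂ) * (l * e * (f k (j+1) - f (k-1) (j+1))) / (f (k+1) (j+1) - f (k-1) (j+1))) = t ∧
      ((starRingEnd ℂ) e * t).re = k * l := by
    refine ⟨_, rfl, ?_⟩
    split_ifs with hk
    · simp [hk]
    · obtain ⟨k', rfl⟩ := Nat.exists_eq_succ_of_ne_zero hk
      simp only [Nat.succ_eq_add_one, Nat.add_sub_cancel] at *
      have fL := F.h k' (j+1)
      rw [rl] at fL
      have hL := F.un k' (j+1) (by rcases hp with ⟨t, ht⟩; exact ⟨t, by omega⟩)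
      have dL := (hcd (k'+1) (j+1)).1 (by omega)
      simp only [Nat.add_sub_cancel] at dL
      have e4 : f (k'+1+1) (j+1) - f k' (j+1) = l * (e + g k' (j+1)) := by
        linear_combination fl + fL
      rw [e4] at dL ⊢
      have hs := right_ne_zero_of_mul dL
      rw [fL]
      have := half_re he hL hs
      have e5 : (starRingEnd ℂ) e * (2 * ((k'+1 : ℕ) : ℂ) * (l * e * (g k' (j+1) * l)) / (l * (e + g k' (j+1)))) =
          ((2 * ((k'+1 : ℕ) : ℝ) * l : ℝ) : ℂ) * ((starRingEnd ℂ) e * (e * g k' (j+1) / (e + g k' (j+1)))) := by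
        push_cast
        field_simp
      rw [e5, re_ofReal_mul, this]
      ring
  obtain ⟨t, ht, htre⟩ := hterm
  rw [ht] at cl
  have tot : e * (2 * (k+1) * (r * l / (r + l)) + I * (2 * (j+1) * (u * d / (u + d)))) =
      γ * l * e + (t + e * (I * ((j+1) * ((l + I * u) * (l - I * d)) / (u + d)))) := by
    rw [← cp', ← cl]; linear_combination γ * fl
  have tot2 : ((2 * (k+1) * (r * l / (r + l)) : ℝ) : ℂ) + I * ((2 * (j+1) * (u * d / (u + d)) : ℝ) : ℂ) =
      ((γ * l : ℝ) : ℂ) + (starRingEnd ℂ) e * t + (((-(j+1) * (l * (u - d)) / (u + d) : ℝ) : ℂ)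
        + I * (((j+1) * (l * l + u * d) / (u + d) : ℝ) : ℂ)) := by
    have hh : I * (((j:ℂ)+1) * ((l + I * u) * (l - I * d)) / (u + d)) =
        (((-(j+1) * (l * (u - d)) / (u + d) : ℝ) : ℂ) + I * (((j+1) * (l * l + u * d) / (u + d) : ℝ) : ℂ)) := by
      push_cast
      field_simp
      ring_nf
      simp only [I_sq, show I^3 = -I by rw [pow_succ, I_sq]; ring]
      ring
    rw [← hh]
    push_cast
    linear_combination (starRingEnd ℂ) e * tot - (2 * (k+1) * (r * l / (r + l)) + I * (2 * (j+1) * (u * d / (u + d)))) * he + (γ * l + (I * ((j+1) * ((l + I * u) * (l - I * d)) / (u + d)))) * he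
  have fin := congrArg Complex.re tot2
  simp only [add_re, ofReal_re, re_mul_ofReal, I_re, zero_mul, add_zero, htre] at fin
  have hrl' : r + l ≠ 0 := by exact_mod_cast hrl
  have hud' : u + d ≠ 0 := by exact_mod_cast hud
  field_simp at fin
  apply mul_left_cancel₀ hl
  linear_combination l * fin

end

/-! ## positivity from the diagonal -/

section
variable {γ : ℝ} {β : ℂ} {f g : ℕ → ℕ → ℂ}

lemma Fac.pos_of_diag (F : Fac γ β f g) (hγ0 : 0 < γ) (hγ2 : γ < 2)
    (hc : ConstraintC (γ : ℂ) f) (hcd : CDenomNonzero f)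
    (hdiag : ∀ n, 0 < (g n n).re) : ∀ n m, Even (n+m) → 0 < (g n m).re := by
  have main : ∀ k m, 0 < (g (m + 2*k) m).re := by
    intro k
    induction k with
    | zero => intro m; simpa using hdiag m
    | succ k ih =>
      intro m
      induction m with
      | zero =>
        rw [Nat.zero_add, F.ax]; simpa using sAx_pos γ hγ0 hγ2 (k+1)
      | succ m ihm =>
        have E := F.four hc hcd (m+1+2*k) m ⟨m+k, by ring⟩
        have pl := ih (m+1)
        have pu := ih (m+2)
        rw [show m + 2 + 2*k = m+1+2*k+1 by ring] at pu
        rw [show m + 2*(k+1) = m+1+2*k+1 by ring] at ihm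
        rw [show m + 1 + 2*(k+1) = m+1+2*k+2 by ring]
        push_cast at E
        set r := (g (m+1+2*k+2) (m+1)).re
        set l := (g (m+1+2*k) (m+1)).re
        set u := (g (m+1+2*k+1) (m+2)).re
        set d := (g (m+1+2*k+1) m).re
        have hk : (0:ℝ) ≤ k := Nat.cast_nonneg k
        have hm : (0:ℝ) ≤ m := Nat.cast_nonneg m
        have c1 : 0 < (m:ℝ) + 1 + 2 * k + m + 3 - γ := by linarith
        have c2 : 0 < (m:ℝ) + 1 + 2 * k - m + 1 - γ := by linarith
        have c3 : 0 < (m:ℝ) + 1 + 2 * k + m + 1 + γ := by linarith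
        have c4 : 0 < (m:ℝ) + 1 + 2 * k - m - 1 + γ := by linarith
        have p1 : 0 < ((m:ℝ) + 1 + 2 * k + m + 3 - γ) * u + ((m:ℝ) + 1 + 2 * k - m + 1 - γ) * d := by
          positivity
        have p2 : 0 < l * (((m:ℝ) + 1 + 2 * k + m + 1 + γ) * d + ((m:ℝ) + 1 + 2 * k - m - 1 + γ) * u) := by
          positivity
        rw [← E] at p2
        exact pos_of_mul_pos_left p2 p1.le
  intro n m h
  rcases le_total m n with hmn | hmn
  · obtain ⟨t, ht⟩ := h
    have := main (t - m) m
    rwa [show m + 2*(t-m) = n by omega] at this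
  · rw [← F.syme n m h]
    obtain ⟨t, ht⟩ := h
    have := main (t - n) n
    rwa [show n + 2*(t-n) = m by omega] at this

lemma expI (a : ℝ) : exp (I * a) = (Real.cos a : ℂ) + (Real.sin a : ℂ) * I := by
  rw [mul_comm, exp_mul_I]; simp

/-- The diagonal relation in terms of the real data. -/
lemma Fac.diag (F : Fac γ β f g) (n : ℕ) :
    (I * g n (n+1)) * ((g n n).re - I * (g (n+1) (n+1)).re) =
      g (n+1) n * ((g n n).re + I * (g (n+1) (n+1)).re) := by
  have H := F.hir n n
  rw [F.real (n := n) (m := n) ⟨n, rfl⟩, F.real (n := n+1) (m := n+1) ⟨n+1, rfl⟩] at H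
  linear_combination -H - g n (n+1) * (g (n+1) (n+1)).re * I_sq

lemma Fac.diag_pos (F : Fac γ β f g) (a : ℕ → ℝ) (ha : ∀ n, a n ∈ Set.Ioo 0 (Real.pi / 2))
    (hf : ∀ n, f n (n+1) - f n n = exp (2 * I * a n) * (f (n+1) n - f n n)) :
    ∀ n, 0 < (g n n).re := by
  intro n
  induction n with
  | zero =>
    have := F.ax 0
    rw [show 2*0 = 0 by ring] at this
    rw [this]; simp [sAx]
  | succ n ih =>
    have D := F.diag n
    have h1 := hf n
    rw [F.h, F.v] at h1
    have ng := F.nz n n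
    have nb := F.nz (n+1) n
    have h2 : I * g n (n+1) = exp (2 * I * a n) * g (n+1) n := by
      apply mul_left_cancel₀ ng
      linear_combination h1
    have hx : exp (2 * I * a n) = exp (I * a n) * exp (I * a n) := by
      rw [← exp_add]; congr 1; ring
    have hne : exp (I * a n) ≠ 0 := exp_ne_zero _
    have hinv : exp (I * a n) * exp (-(I * a n)) = 1 := by rw [← exp_add]; simp
    rw [h2, hx] at D
    have D2 : exp (I * a n) * ((g n n).re - I * (g (n+1) (n+1)).re) =
        exp (-(I * a n)) * ((g n n).re + I * (g (n+1) (n+1)).re) := by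
      apply mul_left_cancel₀ nb
      apply mul_left_cancel₀ hne
      linear_combination D - (g (n+1) n * ((g n n).re + I * (g (n+1) (n+1)).re)) * hinv
    rw [show -(I * (a n : ℂ)) = I * ((-(a n) : ℝ) : ℂ) by push_cast; ring, expI, expI] at D2
    have D3 := congrArg Complex.im D2
    simp [-ofReal_cos, -ofReal_sin] at D3
    obtain ⟨a0, a1⟩ := ha n
    have hs : 0 < Real.sin (a n) := Real.sin_pos_of_pos_of_lt_pi a0 (by linarith [Real.pi_pos])
    have hcs : 0 < Real.cos (a n) := Real.cos_pos_of_mem_Ioo ⟨by linarith [Real.pi_pos], a1⟩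
    have : (g (n+1) (n+1)).re * Real.cos (a n) = (g n n).re * Real.sin (a n) := by linarith
    have p : 0 < (g (n+1) (n+1)).re * Real.cos (a n) := by rw [this]; positivity
    exact pos_of_mul_pos_left p hcs.le

lemma claim1 {x x' : ℂ} {l c r : ℂ} (hlr : l + r ≠ 0) (hx : I + x * x' ≠ 0)
    (A : x^2 * (l - I * c) = l + I * c) (B : r * (x' + I * x) = c * (x + I * x')) :
    (x^2 - 1) * ((x' - I * x) / (I + x * x')) = 2 * r * x / (l + r) := by
  rw [← mul_div_assoc, div_eq_div_iff hx hlr]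
  linear_combination (x' - I * x) * A - (x^2 + 1) * B + (-c * x * (x^2+1)) * I_sq

lemma claim2 {x x0 : ℂ} {l c d : ℂ} (hdc : d + c ≠ 0) (hx : I + x0 * x ≠ 0)
    (A : x^2 * (l - I * c) = l + I * c) (B : d * (x + I * x0) = l * (x0 + I * x)) :
    (x^2 + 1) * ((x0 + I * x) / (I + x0 * x)) = 2 * d * x / (d + c) := by
  rw [← mul_div_assoc, div_eq_div_iff hx hdc]
  have hA : c * (x^2+1) = -I * l * (x^2-1) := by
    linear_combination I * A + (c * (x^2+1)) * I_sq
  linear_combination (x0 + I * x) * hA + I * (x^2-1) * B - (x^2-1) * d * x0 * I_sq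

lemma ixx_ne {a b : ℝ} (ha : a ∈ Set.Ioo 0 (Real.pi / 2)) (hb : b ∈ Set.Ioo 0 (Real.pi / 2)) :
    I + exp (I * a) * exp (I * b) ≠ 0 := by
  intro h
  rw [← exp_add, show I * (a:ℂ) + I * b = I * ((a + b : ℝ) : ℂ) by push_cast; ring, expI] at h
  have := congrArg Complex.im h
  simp [-ofReal_cos, -ofReal_sin, -ofReal_add] at this
  have hs : 0 < Real.sin (a + b) := Real.sin_pos_of_pos_of_lt_pi (by linarith [ha.1, hb.1])
    (by linarith [ha.2, hb.2])
  linarith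

/-- unit square root with sign. -/
lemma sq_arctan {x : ℂ} {l c : ℝ} (hl : 0 < l) (A : x^2 * (l - I * c) = l + I * c) :
    x = exp (I * Real.arctan (c / l)) ∨ x = -exp (I * Real.arctan (c / l)) := by
  apply sq_eq_sq_iff_eq_or_eq_neg.mp
  set a := Real.arctan (c / l) with ha
  have hc0 : 0 < Real.cos a := Real.cos_arctan_pos _
  have ht : Real.sin a * l = c * Real.cos a := by
    have h1 : Real.tan a = c / l := Real.tan_arctan _
    rw [Real.tan_eq_sin_div_cos] at h1
    field_simp at h1
    linarith
  have hne : (l:ℂ) - I * c ≠ 0 := by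
    intro h
    have := congrArg Complex.re h
    simp at this
    exact hl.ne' this
  apply mul_right_cancel₀ hne
  rw [A, expI]
  have hsq : (Real.sin a : ℂ)^2 + (Real.cos a : ℂ)^2 = 1 := by exact_mod_cast Real.sin_sq_add_cos_sq a
  have htc : (Real.sin a : ℂ) * l = c * Real.cos a := by exact_mod_cast ht
  have hcc : (Real.cos a : ℂ) ≠ 0 := by exact_mod_cast hc0.ne'
  generalize (Real.sin a : ℂ) = S at *
  generalize (Real.cos a : ℂ) = C at *
  have hc' : (c:ℂ) = S * l / C := by field_simp; linear_combination -htc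
  rw [hc']
  field_simp
  have e1 : C - S * I ≠ 0 := by
    intro h
    have : (C - S * I) * (C + S * I) = 1 := by linear_combination hsq - S^2 * I_sq
    rw [h] at this; simp at this
  have : (C + S * I) * (C - S * I) = 1 := by linear_combination hsq - S^2 * I_sq
  linear_combination (-l * (C + S * I)) * this

lemma painleve_of_pos (γ : ℝ) (hγ2 : γ < 2)
    (α : ℝ) (hα0 : 0 < α) (hαπ : α < Real.pi) (f g : ℕ → ℕ → ℂ)
    (F : Fac γ (-I * exp (I * α)) f g) 
    (hc : ConstraintC (γ : ℂ) f) (hcd : CDenomNonzero f)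
    (hpos : ∀ n m, Even (n+m) → 0 < (g n m).re) :
    ∃ a : ℕ → ℝ,
        (∀ n : ℕ, a n ∈ Set.Ioo 0 (Real.pi / 2)) ∧
        a 0 = α / 2 ∧
        (∀ n : ℕ, f n (n+1) - f n n =
          Complex.exp (2 * Complex.I * (a n)) * (f (n+1) n - f n n)) ∧
        PainleveP (γ : ℂ) (fun n => Complex.exp (Complex.I * (a n))) := by
  let a : ℕ → ℝ := fun n => Real.arctan ((g (n+1) (n+1)).re / (g n n).re)
  have pd : ∀ n, 0 < (g n n).re := fun n => hpos n n ⟨n, rfl⟩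
  have ha : ∀ n, a n ∈ Set.Ioo 0 (Real.pi / 2) := fun n =>
    ⟨Real.arctan_pos.mpr (div_pos (pd _) (pd _)), Real.arctan_lt_pi_div_two _⟩
  set w := exp (I * ((α/2 : ℝ) : ℂ)) with hw
  have hww : w * w = exp (I * α) := by
    rw [hw, ← exp_add]; congr 1; push_cast; ring
  have hw0 : w ≠ 0 := exp_ne_zero _
  let x : ℕ → ℂ := fun n => w / g (n+1) n
  have gx : ∀ n, g (n+1) n * x n = w := fun n => by
    simp only [x]; rw [mul_div_cancel₀ _ (F.nz _ _)]
  have x0 : ∀ n, x n ≠ 0 := fun n => div_ne_zero hw0 (F.nz _ _)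
  have gd : ∀ n, I * g n (n+1) = x n ^ 2 * g (n+1) n := by
    intro n
    have h1 := F.symo (n+1) n ⟨n, by ring⟩
    rw [← hww] at h1
    apply mul_right_cancel₀ (F.nz (n+1) n)
    have := gx n
    linear_combination I * h1 - w * w * I_sq - (w + g (n+1) n * x n) * this
  have A : ∀ n, x n ^ 2 * ((g n n).re - I * (g (n+1) (n+1)).re) = (g n n).re + I * (g (n+1) (n+1)).re := by
    intro n
    have D := F.diag n
    rw [gd n] at D
    apply mul_left_cancel₀ (F.nz (n+1) n)
    linear_combination D
  have B : ∀ n, (g (n+2) n).re * (x (n+1) + I * x n) = (g (n+1) (n+1)).re * (x n + I * x (n+1)) := by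
    intro n
    have H := F.hir (n+1) n
    rw [show n+1+1 = n+2 by ring, F.real (n := n+2) (m := n) ⟨n+1, by ring⟩,
      F.real (n := n+1) (m := n+1) ⟨n+1, by ring⟩] at H
    have g1 := gx n
    have g2 : g (n+2) (n+1) * x (n+1) = w := gx (n+1)
    apply mul_left_cancel₀ hw0
    generalize g (n+2) (n+1) = G at *
    linear_combination (x n * x (n+1)) * H - ((g (n+2) n).re * x (n+1) - (g (n+1) (n+1)).re * I * x (n+1)) * g1
      - ((g (n+2) n).re * I * x n - (g (n+1) (n+1)).re * x n) * g2
  have hcos : ∀ n, 0 < Real.cos (a n) := fun n =>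
    Real.cos_pos_of_mem_Ioo ⟨by linarith [(ha n).1, Real.pi_pos], (ha n).2⟩
  have hxa : ∀ n, x n = exp (I * a n) := by
    intro n
    induction n with
    | zero =>
      rcases sq_arctan (pd 0) (A 0) with h | h
      · exact h
      · exfalso
        have hx : x 0 = w := by simp only [x]; rw [F.g10, div_one]
        rw [hx, hw] at h
        have h' : exp (I * ((α/2 : ℝ) : ℂ)) = - exp (I * a 0) := h
        rw [expI, expI] at h'
        have := congrArg Complex.re h'
        simp [-ofReal_cos, -ofReal_sin, -ofReal_div] at this
        have h1 := hcos 0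
        have h2 : 0 < Real.cos (α/2) := Real.cos_pos_of_mem_Ioo ⟨by linarith, by linarith⟩
        linarith
    | succ n ih =>
      rcases sq_arctan (pd (n+1)) (A (n+1)) with h | h
      · exact h
      · exfalso
        have h' : x (n+1) = - exp (I * a (n+1)) := h
        have Bn := B n
        rw [h', ih] at Bn
        have hr := hpos (n+2) n ⟨n+1, by ring⟩
        have hcc := pd (n+1)
        set r := (g (n+2) n).re
        set c := (g (n+1) (n+1)).re
        have hy : exp (I * a (n+1)) * exp (-(I * a (n+1))) = 1 := by rw [← exp_add]; simp
        have hz : exp (I * a n) * exp (-(I * a (n+1))) = exp (I * ((a n - a (n+1) : ℝ) : ℂ)) := by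
          rw [← exp_add]; congr 1; push_cast; ring
        have C : (r:ℂ) * (-1 + I * exp (I * ((a n - a (n+1) : ℝ) : ℂ))) =
            c * (exp (I * ((a n - a (n+1) : ℝ) : ℂ)) - I) := by
          linear_combination exp (-(I * a (n+1))) * Bn + (r + -c * I) * hy + (-r * I + c) * hz
        rw [expI] at C
        have C2 := congrArg Complex.re C
        simp [-ofReal_cos, -ofReal_sin, -ofReal_sub] at C2
        have h1 : 0 < Real.cos (a n - a (n+1)) := Real.cos_pos_of_mem_Ioo
          ⟨by linarith [(ha n).1, (ha (n+1)).2], by linarith [(ha n).2, (ha (n+1)).1]⟩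
        have h2 := Real.neg_one_le_sin (a n - a (n+1))
        have p1 : 0 < c * Real.cos (a n - a (n+1)) := by positivity
        nlinarith
  refine ⟨a, ha, ?_, ?_, ?_⟩
  · have hx : x 0 = w := by simp only [x]; rw [F.g10, div_one]
    have h := hxa 0
    rw [hx, hw, expI, expI] at h
    have h' := congrArg Complex.re h
    simp [-ofReal_cos, -ofReal_sin, -ofReal_div] at h'
    apply Real.injOn_cos
    · exact ⟨(ha 0).1.le, by linarith [(ha 0).2, Real.pi_pos]⟩
    · exact ⟨by linarith, by linarith⟩
    · exact h'.symm
  · intro n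
    have : exp (2 * I * a n) = x n ^ 2 := by
      rw [hxa, ← exp_nat_mul]; congr 1; push_cast; ring
    rw [this, F.h, F.v]
    linear_combination g n n * gd n
  · have nz : ∀ n, I + x n * x (n+1) ≠ 0 := fun n => by
      rw [hxa, hxa]; exact ixx_ne (ha n) (ha (n+1))
    have hfun : (fun n => exp (I * a n)) = x := by
      funext n; exact (hxa n).symm
    rw [hfun]
    intro n
    refine ⟨nz n, ?_, ?_⟩
    · intro hn
      obtain ⟨k, rfl⟩ := Nat.exists_eq_succ_of_ne_zero hn
      exact nz k
    · have hr := hpos (n+2) n ⟨n+1, by ring⟩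
      have hl := pd n
      have hlr : ((g n n).re : ℂ) + (g (n+2) n).re ≠ 0 := by
        have : (g n n).re + (g (n+2) n).re ≠ 0 := by positivity
        exact_mod_cast this
      have c1 := claim1 hlr (nz n) (A n) (B n)
      rw [mul_assoc, c1]
      rcases Nat.eq_zero_or_pos n with hn | hn
      · subst hn
        have a0 := F.ax 0
        have a1 := F.ax 1
        rw [show 2*0 = 0 by ring] at a0
        rw [show 2*1 = 0+2 by ring] at a1
        have h2 : (2:ℝ) - γ ≠ 0 := by linarith
        have h2c : (2:ℂ) - γ ≠ 0 := by exact_mod_cast h2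
        have b0 : (g 0 0).re = 1 := by rw [a0, ofReal_re]; simp [sAx]
        have b1 : (g (0+2) 0).re = γ / (2 - γ) := by rw [a1, ofReal_re]; simp [sAx]
        rw [b0, b1]
        have e : (1:ℂ) + γ / (2 - γ) = 2 / (2 - γ) := by field_simp; ring
        push_cast
        rw [e]
        field_simp
        simp
        ring
      · obtain ⟨k, rfl⟩ := Nat.exists_eq_succ_of_ne_zero hn.ne'
        simp only [Nat.succ_eq_add_one, Nat.add_sub_cancel] at *
        have hdp := hpos (k+2) k ⟨k+1, by ring⟩
        have hcp := pd (k+2)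
        have hdc : ((g (k+2) k).re : ℂ) + (g (k+2) (k+2)).re ≠ 0 := by
          have : (g (k+2) k).re + (g (k+2) (k+2)).re ≠ 0 := by positivity
          exact_mod_cast this
        have c2 := claim2 hdc (nz k) (A (k+1)) (B k)
        rw [mul_assoc (((k+1:ℕ)):ℂ) (x (k+1) ^ 2 + 1), c2]
        have E : (g (k+1+2) (k+1)).re * (((k+1:ℕ)+k+3-γ) * (g (k+2) (k+2)).re + ((k+1:ℕ)-k+1-γ) * (g (k+2) k).re) =
          (g (k+1) (k+1)).re * (((k+1:ℕ)+k+1+γ) * (g (k+2) k).re + ((k+1:ℕ)-k-1+γ) * (g (k+2) (k+2)).re) :=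
          F.four hc hcd (k+1) k ⟨k, by ring⟩
        have E' := congrArg (fun t : ℝ => (t : ℂ)) E
        clear c1 c2 E
        have ht := x0 (k+1)
        generalize x (k+1) = t at *
        generalize (g (k+1+2) (k+1)).re = r at *
        generalize (g (k+1) (k+1)).re = l at *
        generalize (g (k+2) (k+2)).re = c at *
        generalize (g (k+2) k).re = d at *
        push_cast at E' ⊢
        rw [← mul_div_assoc, ← mul_div_assoc, div_sub_div _ _ hlr hdc, div_eq_iff (mul_ne_zero hlr hdc)]
        linear_combination t * E'

end

theorem immersion_iff_painleve (γ : ℝ) (hγ0 : 0 < γ) (hγ2 : γ < 2)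
    (α : ℝ) (hα0 : 0 < α) (hαπ : α < Real.pi)
    (f : ℕ → ℕ → ℂ)
    (hq : CrossRatioEq f) (hqd : QDenomNonzero f)
    (hc : ConstraintC (γ : ℂ) f) (hcd : CDenomNonzero f)
    (h00 : f 0 0 = 0) (h10 : f 1 0 = 1)
    (h01 : f 0 1 = Complex.exp (Complex.I * α)) :
    IsImmersion f ↔
      ∃ a : ℕ → ℝ,
        (∀ n : ℕ, a n ∈ Set.Ioo 0 (Real.pi / 2)) ∧
        a 0 = α / 2 ∧
        (∀ n : ℕ, f n (n+1) - f n n =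
          Complex.exp (2 * Complex.I * (a n)) * (f (n+1) n - f n n)) ∧
        PainleveP (γ : ℂ) (fun n => Complex.exp (Complex.I * (a n))) := by
  have F := exists_fact γ hγ0 hγ2 α f hq hqd hc hcd h00 h10 h01
  constructor
  · intro him
    have g00 : gF γ f 0 0 = 1 := by simpa [sAx] using F.ax 0
    refine painleve_of_pos γ hγ2 α hα0 hαπ f _ F hc hcd (F.pos_of_immersion ?_ ?_ him)
    · rw [g00]; simp
    · have D := F.diag 0
      have h1 := F.v 0 0
      simp only [Nat.zero_add] at D h1
      rw [h00, h01, g00] at h1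
      have h1' : I * gF γ f 0 1 = exp (I * α) := by linear_combination -h1
      rw [h1', F.g10, g00, expI] at D
      have D2 := congrArg Complex.re D
      simp [-ofReal_cos, -ofReal_sin] at D2
      have hs : 0 < Real.sin α := Real.sin_pos_of_pos_of_lt_pi hα0 hαπ
      have hcl : Real.cos α < 1 := by
        nlinarith [Real.sin_sq_add_cos_sq α, Real.cos_le_one α]
      have : 0 < Real.sin α * (gF γ f 1 1).re := by linarith
      exact pos_of_mul_pos_right this hs.le
  · rintro ⟨a, ha, -, hf, -⟩
    exact F.immersion_of_pos (F.pos_of_diag hγ0 hγ2 hc hcd (F.diag_pos a ha hf))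

end
end

section
/- Let 0 < γ < 2. There exists a sequence of angles α_n ∈ (0, π/2), n ≥ 0, such that the sequence x_n = e^{iα_n} satisfies the discrete Painlevé equation (P) with parameter γ for all n ≥ 0; in particular, there exists a unitary solution of (P) all of whose terms lie in the closed arc A_I = {e^{iβ} : β ∈ [0, π/2]} and are distinct from 1 and i. -/
open Complex

noncomputable section

/-- The ratio. -/
def pvF (c a : ℝ) : ℝ := (1 + c - a + c * a) / (1 + c + a - c * a)

/-- The right-hand side. -/
def pvP (γ : ℝ) (n : ℕ) (c a : ℝ) : ℝ :=
  γ + 2 * n * ((1 - a ^ 2) / (1 + a ^ 2)) * pvF c a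

/-- Twice (n+1) times the sine. -/
def pvS (n : ℕ) (a : ℝ) : ℝ := 4 * (n + 1) * (a / (1 + a ^ 2))

/-- Numerator. -/
def pvN (γ : ℝ) (n : ℕ) (c a : ℝ) : ℝ := (1 + a) * (pvS n a - pvP γ n c a)

/-- Denominator. -/
def pvD (γ : ℝ) (n : ℕ) (c a : ℝ) : ℝ := (1 - a) * (pvS n a + pvP γ n c a)

/-- Clamped step. -/
def pvG (γ : ℝ) (n : ℕ) (c a : ℝ) : ℝ :=
  max 0 (pvN γ n c a / max (pvD γ n c a) (pvN γ n c a))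

/-- Orbit of pairs. -/
def pvT (γ : ℝ) (s : ℝ) : ℕ → ℝ × ℝ
  | 0 => (s, s)
  | n + 1 => ((pvT γ s n).2, pvG γ n (pvT γ s n).1 (pvT γ s n).2)

lemma pv_den {c a : ℝ} (hc : c ∈ Set.Icc (0:ℝ) 1) (ha : a ∈ Set.Icc (0:ℝ) 1) :
    0 < 1 + c + a - c * a := by
  obtain ⟨h1, h2⟩ := hc
  obtain ⟨h3, h4⟩ := ha
  nlinarith

lemma pvP_pos {γ : ℝ} (hγ : 0 < γ) (n : ℕ) {c a : ℝ} (hc : c ∈ Set.Icc (0:ℝ) 1)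
    (ha : a ∈ Set.Icc (0:ℝ) 1) : 0 < pvP γ n c a := by
  have hd := pv_den hc ha
  obtain ⟨h1, h2⟩ := hc
  obtain ⟨h3, h4⟩ := ha
  have hF : 0 ≤ pvF c a := div_nonneg (by nlinarith) hd.le
  have : 0 ≤ (1 - a ^ 2) / (1 + a ^ 2) := div_nonneg (by nlinarith) (by positivity)
  unfold pvP
  positivity

lemma pvS_nonneg (n : ℕ) {a : ℝ} (ha : a ∈ Set.Icc (0:ℝ) 1) : 0 ≤ pvS n a := by
  have := ha.1
  unfold pvS
  positivity

lemma pvD_nonneg {γ : ℝ} (hγ : 0 < γ) (n : ℕ) {c a : ℝ} (hc : c ∈ Set.Icc (0:ℝ) 1)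
    (ha : a ∈ Set.Icc (0:ℝ) 1) : 0 ≤ pvD γ n c a :=
  mul_nonneg (by linarith [ha.2]) (by linarith [pvP_pos hγ n hc ha, pvS_nonneg n ha])

lemma pvN_zero {γ : ℝ} (hγ : 0 < γ) (n : ℕ) {c : ℝ} (hc : c ∈ Set.Icc (0:ℝ) 1) :
    pvN γ n c 0 < 0 := by
  have := pvP_pos hγ n hc (a := 0) (by simp)
  simp [pvN, pvS]
  exact this

lemma pvN_one {γ : ℝ} (hγ2 : γ < 2) (n : ℕ) (c : ℝ) :
    pvD γ n c 1 < pvN γ n c 1 := by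
  have : (0:ℝ) ≤ n := n.cast_nonneg
  simp [pvN, pvD, pvS, pvP]
  linarith

lemma pv_max {γ : ℝ} (hγ : 0 < γ) (hγ2 : γ < 2) (n : ℕ) {c a : ℝ}
    (hc : c ∈ Set.Icc (0:ℝ) 1) (ha : a ∈ Set.Icc (0:ℝ) 1) :
    0 < max (pvD γ n c a) (pvN γ n c a) := by
  rcases eq_or_lt_of_le ha.2 with h | h
  · subst h
    exact lt_max_of_lt_right (lt_of_le_of_lt (pvD_nonneg hγ n hc ha) (pvN_one hγ2 n c))
  · exact lt_max_of_lt_left (mul_pos (by linarith)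
      (by linarith [pvP_pos hγ n hc ha, pvS_nonneg n ha]))

lemma pvG_mem {γ : ℝ} (hγ : 0 < γ) (hγ2 : γ < 2) (n : ℕ) {c a : ℝ}
    (hc : c ∈ Set.Icc (0:ℝ) 1) (ha : a ∈ Set.Icc (0:ℝ) 1) :
    pvG γ n c a ∈ Set.Icc (0:ℝ) 1 := by
  refine ⟨le_max_left _ _, max_le zero_le_one ?_⟩
  rw [div_le_one (pv_max hγ hγ2 n hc ha)]
  exact le_max_right _ _

lemma pvG_zero {γ : ℝ} (hγ : 0 < γ) (hγ2 : γ < 2) (n : ℕ) {c a : ℝ}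
    (hc : c ∈ Set.Icc (0:ℝ) 1) (ha : a ∈ Set.Icc (0:ℝ) 1) (h : pvN γ n c a < 0) :
    pvG γ n c a = 0 :=
  max_eq_left (div_nonpos_of_nonpos_of_nonneg h.le (pv_max hγ hγ2 n hc ha).le)

lemma pvG_one {γ : ℝ} (hγ : 0 < γ) (n : ℕ) {c a : ℝ}
    (hc : c ∈ Set.Icc (0:ℝ) 1) (ha : a ∈ Set.Icc (0:ℝ) 1) (h : pvD γ n c a < pvN γ n c a) :
    pvG γ n c a = 1 := by
  have := pvD_nonneg hγ n hc ha
  rw [pvG, max_eq_right h.le, div_self (by linarith), max_eq_right zero_le_one]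

lemma pvT_mem {γ : ℝ} (hγ : 0 < γ) (hγ2 : γ < 2) {s : ℝ} (hs : s ∈ Set.Icc (0:ℝ) 1) (n : ℕ) :
    (pvT γ s n).1 ∈ Set.Icc (0:ℝ) 1 ∧ (pvT γ s n).2 ∈ Set.Icc (0:ℝ) 1 := by
  induction n with
  | zero => exact ⟨hs, hs⟩
  | succ n ih => exact ⟨ih.2, pvG_mem hγ hγ2 n ih.1 ih.2⟩

lemma pvND_cont {γ : ℝ} (n : ℕ) {X : Type*} [TopologicalSpace X] {f g : X → ℝ}
    (hf : Continuous f) (hg : Continuous g) (hf1 : ∀ x, f x ∈ Set.Icc (0:ℝ) 1)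
    (hg1 : ∀ x, g x ∈ Set.Icc (0:ℝ) 1) :
    Continuous (fun x => pvN γ n (f x) (g x)) ∧ Continuous (fun x => pvD γ n (f x) (g x)) := by
  have hd : ∀ x, 1 + f x + g x - f x * g x ≠ 0 := fun x => (pv_den (hf1 x) (hg1 x)).ne'
  have hq : ∀ x, 1 + g x ^ 2 ≠ 0 := fun x => by positivity
  have hS : Continuous (fun x => pvS n (g x)) := by
    unfold pvS
    exact continuous_const.mul (hg.div (by fun_prop) hq)
  have hP : Continuous (fun x => pvP γ n (f x) (g x)) := by
    unfold pvP pvF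
    have h1 : Continuous (fun x => (1 - g x ^ 2) / (1 + g x ^ 2)) :=
      Continuous.div (by fun_prop) (by fun_prop) hq
    have h2 : Continuous (fun x => (1 + f x - g x + f x * g x) / (1 + f x + g x - f x * g x)) :=
      Continuous.div (by fun_prop) (by fun_prop) hd
    fun_prop
  unfold pvN pvD
  constructor <;> fun_prop

lemma pvT_cont {γ : ℝ} (hγ : 0 < γ) (hγ2 : γ < 2) (n : ℕ) :
    Continuous (fun s : Set.Icc (0:ℝ) 1 => (pvT γ s n).1) ∧
    Continuous (fun s : Set.Icc (0:ℝ) 1 => (pvT γ s n).2) := by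
  induction n with
  | zero => exact ⟨continuous_subtype_val, continuous_subtype_val⟩
  | succ n ih =>
    refine ⟨ih.2, ?_⟩
    obtain ⟨hN, hD⟩ := pvND_cont (γ := γ) n ih.1 ih.2
      (fun s => (pvT_mem hγ hγ2 s.2 n).1) (fun s => (pvT_mem hγ hγ2 s.2 n).2)
    exact continuous_const.max (hN.div (hD.max hN)
      fun s => (pv_max hγ hγ2 n (pvT_mem hγ hγ2 s.2 n).1 (pvT_mem hγ hγ2 s.2 n).2).ne')

lemma pvT_zero_abs {γ : ℝ} (hγ : 0 < γ) (hγ2 : γ < 2) {s : ℝ} (hs : s ∈ Set.Icc (0:ℝ) 1) (n : ℕ)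
    (h : pvN γ n (pvT γ s n).1 (pvT γ s n).2 < 0) (k : ℕ) : (pvT γ s (n + 1 + k)).2 = 0 := by
  induction k with
  | zero => exact pvG_zero hγ hγ2 n (pvT_mem hγ hγ2 hs n).1 (pvT_mem hγ hγ2 hs n).2 h
  | succ k ih =>
    have hm := pvT_mem hγ hγ2 hs (n + 1 + k)
    refine pvG_zero hγ hγ2 _ hm.1 hm.2 ?_
    change pvN γ _ _ (pvT γ s (n + 1 + k)).2 < 0
    rw [ih]
    exact pvN_zero hγ _ hm.1

lemma pvT_one_abs {γ : ℝ} (hγ : 0 < γ) (hγ2 : γ < 2) {s : ℝ} (hs : s ∈ Set.Icc (0:ℝ) 1) (n : ℕ)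
    (h : pvD γ n (pvT γ s n).1 (pvT γ s n).2 < pvN γ n (pvT γ s n).1 (pvT γ s n).2) (k : ℕ) :
    (pvT γ s (n + 1 + k)).2 = 1 := by
  induction k with
  | zero => exact pvG_one hγ n (pvT_mem hγ hγ2 hs n).1 (pvT_mem hγ hγ2 hs n).2 h
  | succ k ih =>
    have hm := pvT_mem hγ hγ2 hs (n + 1 + k)
    refine pvG_one hγ _ hm.1 hm.2 ?_
    change pvD γ _ _ (pvT γ s (n + 1 + k)).2 < pvN γ _ _ (pvT γ s (n + 1 + k)).2
    rw [ih]
    exact pvN_one hγ2 _ _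

lemma pv_exists {γ : ℝ} (hγ : 0 < γ) (hγ2 : γ < 2) :
    ∃ s ∈ Set.Icc (0:ℝ) 1, ∀ n, 0 ≤ pvN γ n (pvT γ s n).1 (pvT γ s n).2 ∧
      pvN γ n (pvT γ s n).1 (pvT γ s n).2 ≤ pvD γ n (pvT γ s n).1 (pvT γ s n).2 := by
  by_contra! hcon
  let U : Set (Set.Icc (0:ℝ) 1) := ⋃ n, {s | pvN γ n (pvT γ s n).1 (pvT γ s n).2 < 0}
  let V : Set (Set.Icc (0:ℝ) 1) := ⋃ n, {s | pvD γ n (pvT γ s n).1 (pvT γ s n).2 <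
    pvN γ n (pvT γ s n).1 (pvT γ s n).2}
  have hc : ∀ n, _ := fun n => pvND_cont (γ := γ) n (pvT_cont hγ hγ2 n).1 (pvT_cont hγ hγ2 n).2
      (fun s => (pvT_mem hγ hγ2 s.2 n).1) (fun s => (pvT_mem hγ hγ2 s.2 n).2)
  have hU : IsOpen U := isOpen_iUnion fun n => isOpen_lt (hc n).1 continuous_const
  have hV : IsOpen V := isOpen_iUnion fun n => isOpen_lt (hc n).2 (hc n).1
  have hcov : Set.univ ⊆ U ∪ V := by
    intro s _
    obtain ⟨n, hn⟩ := hcon s s.2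
    by_cases h : pvN γ n (pvT γ s n).1 (pvT γ s n).2 < 0
    · exact Or.inl (Set.mem_iUnion.2 ⟨n, h⟩)
    · exact Or.inr (Set.mem_iUnion.2 ⟨n, hn (not_lt.1 h)⟩)
  have h0 : (Set.univ ∩ U).Nonempty :=
    ⟨⟨0, by simp⟩, trivial, Set.mem_iUnion.2 ⟨0, pvN_zero hγ 0 (by simp [pvT])⟩⟩
  have h1 : (Set.univ ∩ V).Nonempty :=
    ⟨⟨1, by simp⟩, trivial, Set.mem_iUnion.2 ⟨0, pvN_one hγ2 0 _⟩⟩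
  obtain ⟨s, -, hsU, hsV⟩ := isPreconnected_univ U V hU hV hcov h0 h1
  obtain ⟨n, hn⟩ := Set.mem_iUnion.1 hsU
  obtain ⟨m, hm⟩ := Set.mem_iUnion.1 hsV
  have e0 := pvT_zero_abs hγ hγ2 s.2 n hn m
  have e1 := pvT_one_abs hγ hγ2 s.2 m hm n
  rw [show m + 1 + n = n + 1 + m by ring, e0] at e1
  exact zero_ne_one e1

lemma pv_real {γ : ℝ} (hγ : 0 < γ) (hγ2 : γ < 2) :
    ∃ t : ℕ → ℝ, (∀ n, 0 < t n ∧ t n < 1) ∧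
      ∀ n, pvS n (t n) * pvF (t n) (t (n+1)) = pvP γ n (t (n-1)) (t n) := by
  obtain ⟨s, hs, h⟩ := pv_exists hγ hγ2
  have hm := pvT_mem hγ hγ2 hs
  have hpos : ∀ n, 0 < (pvT γ s n).2 ∧ (pvT γ s n).2 < 1 := by
    intro n
    constructor
    · refine lt_of_le_of_ne (hm n).2.1 fun e => ?_
      have h1 := (h n).1
      rw [← e] at h1
      exact absurd (pvN_zero hγ n (hm n).1) (not_lt.2 h1)
    · refine lt_of_le_of_ne (hm n).2.2 fun e => ?_
      have h1 := (h n).2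
      rw [e] at h1
      exact absurd (pvN_one hγ2 n _) (not_lt.2 h1)
  refine ⟨fun n => (pvT γ s n).2, hpos, fun n => ?_⟩
  have hprev : (pvT γ s (n-1)).2 = (pvT γ s n).1 := by cases n <;> rfl
  have hb : (pvT γ s (n+1)).2 = pvN γ n (pvT γ s n).1 (pvT γ s n).2 /
      pvD γ n (pvT γ s n).1 (pvT γ s n).2 := by
    change pvG _ _ _ _ = _
    rw [pvG, max_eq_left (h n).2, max_eq_right]
    exact div_nonneg (h n).1 (pvD_nonneg hγ n (hm n).1 (hm n).2)
  have hP := pvP_pos hγ n (hm n).1 (hm n).2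
  have hS : 0 < pvS n (pvT γ s n).2 := by
    have := (hpos n).1
    unfold pvS
    positivity
  have hden := pv_den (hm n).2 (hm (n+1)).2
  simp only [hprev]
  obtain ⟨p0, p1⟩ := hpos n
  revert hb hden
  generalize (pvT γ s (n+1)).2 = b
  unfold pvN pvD pvF
  generalize pvP γ n (pvT γ s n).1 (pvT γ s n).2 = P at *
  generalize pvS n (pvT γ s n).2 = S at *
  generalize (pvT γ s n).2 = a at *
  intro hb hden
  have ha : 1 - a ≠ 0 := by linarith
  have hSP : S + P ≠ 0 := by linarith
  rw [eq_div_iff (mul_ne_zero ha hSP)] at hb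
  rw [← mul_div_assoc, div_eq_iff hden.ne']
  linear_combination -hb

lemma pv_exp (t : ℝ) : Complex.exp (Complex.I * ((2 * Real.arctan t : ℝ) : ℂ)) =
    (1 + Complex.I * t) / (1 - Complex.I * t) := by
  have hq : (1 + t ^ 2 : ℝ) ≠ 0 := by positivity
  have hne : (1 - Complex.I * t) ≠ 0 := by
    intro h
    have := congrArg Complex.re h
    simp at this
  have hc : Real.cos (2 * Real.arctan t) = (1 - t ^ 2) / (1 + t ^ 2) := by
    rw [Real.cos_two_mul, Real.cos_sq_arctan]
    field_simp
    ring
  have hs : Real.sin (2 * Real.arctan t) = 2 * t / (1 + t ^ 2) := by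
    have h1 := Real.cos_sq_arctan t
    have h2 : Real.sin (Real.arctan t) = t * Real.cos (Real.arctan t) := by
      have := Real.tan_mul_cos (Real.cos_arctan_pos t).ne'
      rw [Real.tan_arctan] at this
      exact this.symm
    rw [Real.sin_two_mul, h2,
      show 2 * (t * Real.cos (Real.arctan t)) * Real.cos (Real.arctan t)
        = 2 * t * Real.cos (Real.arctan t) ^ 2 by ring, h1]
    ring
  rw [mul_comm, Complex.exp_mul_I, ← Complex.ofReal_cos, ← Complex.ofReal_sin, hc, hs]
  have hq' : (1 + (t:ℂ) ^ 2) ≠ 0 := by exact_mod_cast hq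
  rw [eq_div_iff hne]
  push_cast
  field_simp
  linear_combination (-2 * (t:ℂ) ^ 2) * Complex.I_sq

lemma pv_ne (t : ℝ) : (1 - Complex.I * t) ≠ 0 := by
  intro h
  have := congrArg Complex.re h
  simp at this

lemma pv_ne' (t : ℝ) : (1 + Complex.I * t) ≠ 0 := by
  intro h
  have := congrArg Complex.re h
  simp at this

lemma pv_I : (1 + Complex.I) ≠ 0 := by
  intro h
  have := congrArg Complex.re h
  simp at this

lemma pv_cden (a b : ℝ) :
    Complex.I + (1 + Complex.I * a) / (1 - Complex.I * a) * ((1 + Complex.I * b) / (1 - Complex.I * b))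
      = (1 + Complex.I) * ((1 + a + b - a * b : ℝ) : ℂ) /
        ((1 - Complex.I * a) * (1 - Complex.I * b)) := by
  have h1 := pv_ne a
  have h2 := pv_ne b
  rw [div_mul_div_comm, eq_div_iff (mul_ne_zero h1 h2), add_mul,
    div_mul_cancel₀ _ (mul_ne_zero h1 h2)]
  push_cast
  linear_combination (-(a:ℂ) - b + (a:ℂ) * b + Complex.I * a * b) * Complex.I_sq

lemma pv_r1 (a b : ℝ) (h : 1 + a + b - a * b ≠ 0) :
    ((1 + Complex.I * b) / (1 - Complex.I * b) - Complex.I * ((1 + Complex.I * a) / (1 - Complex.I * a)))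
      / (Complex.I + (1 + Complex.I * a) / (1 - Complex.I * a) * ((1 + Complex.I * b) / (1 - Complex.I * b)))
      = -Complex.I * (pvF a b : ℂ) := by
  have h1 := pv_ne a
  have h2 := pv_ne b
  have h3 := pv_I
  have h4 : ((1 + a + b - a * b : ℝ) : ℂ) ≠ 0 := by exact_mod_cast h
  have hn : (1 + Complex.I * b) / (1 - Complex.I * b) - Complex.I * ((1 + Complex.I * a) / (1 - Complex.I * a))
      = (-Complex.I) * (1 + Complex.I) * ((1 + a - b + a * b : ℝ) : ℂ) /
        ((1 - Complex.I * a) * (1 - Complex.I * b)) := by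
    rw [eq_div_iff (mul_ne_zero h1 h2)]
    field_simp
    push_cast
    ring_nf
    simp only [show Complex.I ^ 3 = -Complex.I by rw [pow_succ, Complex.I_sq]; ring, Complex.I_sq]
    ring
  rw [pv_cden, hn, pvF, div_div_div_cancel_right₀ (mul_ne_zero h1 h2), Complex.ofReal_div]
  field_simp

lemma pv_r2 (c a : ℝ) (h : 1 + c + a - c * a ≠ 0) :
    ((1 + Complex.I * c) / (1 - Complex.I * c) + Complex.I * ((1 + Complex.I * a) / (1 - Complex.I * a)))
      / (Complex.I + (1 + Complex.I * c) / (1 - Complex.I * c) * ((1 + Complex.I * a) / (1 - Complex.I * a)))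
      = (pvF c a : ℂ) := by
  have h1 := pv_ne c
  have h2 := pv_ne a
  have h3 := pv_I
  have h4 : ((1 + c + a - c * a : ℝ) : ℂ) ≠ 0 := by exact_mod_cast h
  have hn : (1 + Complex.I * c) / (1 - Complex.I * c) + Complex.I * ((1 + Complex.I * a) / (1 - Complex.I * a))
      = (1 + Complex.I) * ((1 + c - a + c * a : ℝ) : ℂ) /
        ((1 - Complex.I * c) * (1 - Complex.I * a)) := by
    rw [eq_div_iff (mul_ne_zero h1 h2)]
    field_simp
    push_cast
    ring_nf
    simp only [show Complex.I ^ 3 = -Complex.I by rw [pow_succ, Complex.I_sq]; ring, Complex.I_sq]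
    ring
  rw [pv_cden, hn, pvF, div_div_div_cancel_right₀ (mul_ne_zero h1 h2), Complex.ofReal_div]
  field_simp

lemma pv_m1 (a : ℝ) : ((1 + Complex.I * a) / (1 - Complex.I * a)) ^ 2 - 1 =
    (1 + Complex.I * a) / (1 - Complex.I * a) * (4 * Complex.I * ((a / (1 + a ^ 2) : ℝ) : ℂ)) := by
  have h1 := pv_ne a
  have h2 := pv_ne' a
  have hq : (1 + (a:ℂ) ^ 2) = (1 + Complex.I * a) * (1 - Complex.I * a) := by
    linear_combination (a:ℂ) ^ 2 * Complex.I_sq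
  push_cast
  rw [hq]
  field_simp
  ring

lemma pv_p1 (a : ℝ) : ((1 + Complex.I * a) / (1 - Complex.I * a)) ^ 2 + 1 =
    (1 + Complex.I * a) / (1 - Complex.I * a) * (2 * (((1 - a ^ 2) / (1 + a ^ 2) : ℝ) : ℂ)) := by
  have h1 := pv_ne a
  have h2 := pv_ne' a
  have hq : (1 + (a:ℂ) ^ 2) = (1 + Complex.I * a) * (1 - Complex.I * a) := by
    linear_combination (a:ℂ) ^ 2 * Complex.I_sq
  push_cast
  rw [hq]
  field_simp
  linear_combination 2 * (a:ℂ) ^ 2 * Complex.I_sq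

/-- Theorem 4 (existence): there is a unitary solution `x_n = e^{iα_n}` of the
discrete Painlevé equation (P) with all `α_n ∈ (0, π/2)`; in particular all its terms
lie in the closed arc `A_I` and differ from `1` and `i`. -/
theorem painleve_unitary_solution_exists (γ : ℝ) (hγ0 : 0 < γ) (hγ2 : γ < 2) :
    ∃ a : ℕ → ℝ,
      (∀ n : ℕ, a n ∈ Set.Ioo 0 (Real.pi / 2)) ∧
      PainleveP (γ : ℂ) (fun n => Complex.exp (Complex.I * (a n))) := by
  obtain ⟨t, ht, he⟩ := pv_real hγ0 hγ2
  have hm : ∀ n, t n ∈ Set.Icc (0:ℝ) 1 := fun n => ⟨(ht n).1.le, (ht n).2.le⟩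
  refine ⟨fun n => 2 * Real.arctan (t n), fun n => ⟨?_, ?_⟩, ?_⟩
  · have := Real.arctan_pos.2 (ht n).1
    linarith
  · have := Real.arctan_strictMono (ht n).2
    rw [Real.arctan_one] at this
    linarith
  · have hne : ∀ k l, Complex.I + (1 + Complex.I * t k) / (1 - Complex.I * t k) *
        ((1 + Complex.I * t l) / (1 - Complex.I * t l)) ≠ 0 := by
      intro k l
      rw [pv_cden]
      refine div_ne_zero (mul_ne_zero pv_I ?_) (mul_ne_zero (pv_ne _) (pv_ne _))
      exact_mod_cast (pv_den (hm k) (hm l)).ne'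
    intro n
    simp only [pv_exp]
    refine ⟨hne _ _, fun _ => hne _ _, ?_⟩
    rw [pv_r1 _ _ (pv_den (hm n) (hm (n+1))).ne', pv_r2 _ _ (pv_den (hm (n-1)) (hm n)).ne',
      pv_m1, pv_p1]
    have h := congrArg (fun r : ℝ => (r : ℂ)) (he n)
    simp only [pvS, pvP] at h
    generalize pvF (t n) (t (n+1)) = F1 at *
    generalize pvF (t (n-1)) (t n) = F2 at *
    generalize (t n / (1 + t n ^ 2)) = A at *
    generalize ((1 - t n ^ 2) / (1 + t n ^ 2)) = B at *
    generalize (1 + Complex.I * (t n : ℂ)) / (1 - Complex.I * t n) = x at *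
    push_cast at h
    linear_combination x * h - 4 * ((n:ℂ) + 1) * x * A * F1 * Complex.I_sq

end
end
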